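/- Every fullerene is a flag 3-polytope. -/

import Mathlib

open Set

noncomputable section

/-- The ambient space `ℝ³`. -/
abbrev E3 := EuclideanSpace ℝ (Fin 3)

/-- The cyclic successor in `Fin k`. -/
def nxt {k : ℕ} (i : Fin k) : Fin k := ⟨(i.1 + 1) % k, Nat.mod_lt _ i.pos⟩

/-- The cyclic predecessor in `Fin k`. -/
def prv {k : ℕ} (i : Fin k) : Fin k := ⟨(i.1 + (k - 1)) % k, Nat.mod_lt _ i.pos⟩

/-- A convex polytope in `ℝ³`: the convex hull of a finite set of points. -/
def IsPolytope (P : Set E3) : Prop := ∃ V : Finset E3, P = convexHull ℝ (V : Set E3)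

/-- The dimension of a subset of `ℝ³` (the dimension of its affine hull). -/
def setDim (A : Set E3) : ℕ := Module.finrank ℝ ↥(vectorSpan ℝ A)

/-- A face of a polytope: a nonempty closed convex extreme subset. -/
def IsFaceOf (F P : Set E3) : Prop :=
  F.Nonempty ∧ IsClosed F ∧ Convex ℝ F ∧ IsExtreme ℝ P F

/-- A facet: a `2`-dimensional face. -/
def IsFacetOf (F P : Set E3) : Prop := IsFaceOf F P ∧ setDim F = 2

/-- An edge: a `1`-dimensional face. -/
def IsEdgeOf (F P : Set E3) : Prop := IsFaceOf F P ∧ setDim F = 1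

/-- A vertex: a point whose singleton is a face. -/
def IsVertexOf (v : E3) (P : Set E3) : Prop := IsFaceOf {v} P

/-- The set of facets of `P`. -/
def facets (P : Set E3) : Set (Set E3) := {F | IsFacetOf F P}

/-- A simple 3-polytope: a 3-dimensional convex polytope each of whose vertices
is contained in exactly 3 facets. -/
def IsSimplePolytope3 (P : Set E3) : Prop :=
  IsPolytope P ∧ setDim P = 3 ∧
    ∀ v : E3, IsVertexOf v P → {F | IsFacetOf F P ∧ v ∈ F}.ncard = 3

/-- The number of edges of a facet `F` of `P`. -/
def facetEdges (P F : Set E3) : ℕ := {e | IsEdgeOf e P ∧ e ⊆ F}.ncard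

/-- `pVec P k` is the number of `k`-gonal facets of `P`. -/
def pVec (P : Set E3) (k : ℕ) : ℕ := {F | IsFacetOf F P ∧ facetEdges P F = k}.ncard

/-- A (mathematical) fullerene: a simple 3-polytope with all facets pentagons
and hexagons. -/
def IsFullerene (P : Set E3) : Prop :=
  IsSimplePolytope3 P ∧ ∀ F, IsFacetOf F P → facetEdges P F = 5 ∨ facetEdges P F = 6

/-- A `k`-loop in `P` (`k ≥ 2`): a cyclic sequence of facets in which
(cyclically) consecutive facets intersect in an edge; a `1`-loop is a single facet. -/
def IsLoop (P : Set E3) {k : ℕ} (L : Fin k → Set E3) : Prop :=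
  0 < k ∧ (∀ i, IsFacetOf (L i) P) ∧ (2 ≤ k → ∀ i, IsEdgeOf (L i ∩ L (nxt i)) P)

/-- A simple loop: a loop with pairwise different facets. -/
def IsSimpleLoop (P : Set E3) {k : ℕ} (L : Fin k → Set E3) : Prop :=
  IsLoop P L ∧ Function.Injective L

/-- A `k`-belt (`k ≥ 3`): a `k`-loop such that for `k = 3` the three facets have empty
total intersection, and for `k ≥ 4` two facets intersect iff they are cyclically successive. -/
def IsBelt (P : Set E3) {k : ℕ} (L : Fin k → Set E3) : Prop :=
  3 ≤ k ∧ IsLoop P L ∧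
    (k = 3 → ∀ i, L i ∩ L (nxt i) ∩ L (nxt (nxt i)) = ∅) ∧
    (4 ≤ k → ∀ p q, p ≠ q → ((L p ∩ L q).Nonempty ↔ q = nxt p ∨ p = nxt q))

/-- A flag 3-polytope: a simple 3-polytope different from the tetrahedron
(i.e. not having exactly 4 facets) without 3-belts. -/
def IsFlag3Polytope (P : Set E3) : Prop :=
  IsSimplePolytope3 P ∧ (facets P).ncard ≠ 4 ∧ ∀ B : Fin 3 → Set E3, ¬ IsBelt P B

/-- `γ` is the simple edge-cycle of `P` traced by the cyclically ordered distinct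
vertices `v 0, …, v (n-1)` (`n ≥ 3`), consecutive ones joined by edges of `P`. -/
def IsSimpleEdgeCycleVia (P γ : Set E3) {n : ℕ} (v : Fin n → E3) : Prop :=
  3 ≤ n ∧ Function.Injective v ∧ (∀ i, IsVertexOf (v i) P) ∧
    (∀ i, IsEdgeOf (segment ℝ (v i) (v (nxt i))) P) ∧
    γ = ⋃ i, segment ℝ (v i) (v (nxt i))

/-- A simple edge-cycle in the graph of `P`. -/
def IsSimpleEdgeCycle (P γ : Set E3) : Prop :=
  ∃ (n : ℕ) (v : Fin n → E3), IsSimpleEdgeCycleVia P γ v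

/-- `C` is a connected component of the set `A`. -/
def IsCompOf (C A : Set E3) : Prop := ∃ x ∈ A, C = connectedComponentIn A x

/-- The loop `L` is obtained by walking round the simple edge-cycle `γ` inside the
connected component `C` of `∂P ∖ γ`: the facets of `L` lie on the side `C`, and the
edges of `γ`, in cyclic order, lie in the facets of `L` in cyclic order (the loop
index advancing exactly when the facet changes, and making exactly one turn). -/
def WalksRound (P γ C : Set E3) {k : ℕ} (L : Fin k → Set E3) : Prop :=
  IsLoop P L ∧ (∀ i, intrinsicInterior ℝ (L i) ⊆ C) ∧
    ∃ (n : ℕ) (v : Fin n → E3) (φ : Fin n → Fin k),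
      IsSimpleEdgeCycleVia P γ v ∧
      (∀ i, segment ℝ (v i) (v (nxt i)) ⊆ L (φ i)) ∧
      (∀ i, φ (nxt i) = φ i ∨ φ (nxt i) = nxt (φ i)) ∧
      Function.Surjective φ ∧
      (2 ≤ k → (Finset.univ.filter (fun i : Fin n => φ (nxt i) ≠ φ i)).card = k)

/-- Two loops border each other: they are obtained by walking round the same simple
edge-cycle `γ` in the two different connected components of `∂P ∖ γ`. -/
def Borders (P : Set E3) {k₁ k₂ : ℕ} (L₁ : Fin k₁ → Set E3) (L₂ : Fin k₂ → Set E3) : Prop :=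
  ∃ γ C₁ C₂ : Set E3, IsCompOf C₁ (frontier P \ γ) ∧ IsCompOf C₂ (frontier P \ γ) ∧
    C₁ ≠ C₂ ∧ WalksRound P γ C₁ L₁ ∧ WalksRound P γ C₂ L₂

/-- A loop surrounds the facet `F` if it borders the `1`-loop `(F)`. -/
def Surrounds (P : Set E3) {k : ℕ} (L : Fin k → Set E3) (F : Set E3) : Prop :=
  IsFacetOf F P ∧ Borders P L (fun _ : Fin 1 => F)

/-- The number of edges of `P` lying in the facet `F` and in the set `γ`. -/
def edgesInCommon (P F γ : Set E3) : ℕ := {e | IsEdgeOf e P ∧ e ⊆ F ∧ e ⊆ γ}.ncard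
/-- A simple 3-polytope all of whose facets are pentagons and hexagons except for
at most one exceptional facet, which is a quadrangle or a heptagon. -/
def IsAlmostFullerene (P : Set E3) : Prop :=
  IsSimplePolytope3 P ∧
    (∀ F, IsFacetOf F P → facetEdges P F ∈ ({4, 5, 6, 7} : Set ℕ)) ∧
    {F | IsFacetOf F P ∧ (facetEdges P F = 4 ∨ facetEdges P F = 7)}.ncard ≤ 1

/-- The (combinatorial) dodecahedron: a simple 3-polytope with all facets pentagons. -/
def IsDodecahedron (P : Set E3) : Prop :=
  IsSimplePolytope3 P ∧ ∀ F, IsFacetOf F P → facetEdges P F = 5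

/-- `e` and `e'` are opposite edges of the hexagonal facet `H`: they are disjoint and no
edge of `H` meets both of them. -/
def OppositeEdges (P H e e' : Set E3) : Prop :=
  IsEdgeOf e P ∧ IsEdgeOf e' P ∧ e ⊆ H ∧ e' ⊆ H ∧ e ∩ e' = ∅ ∧
    ∀ e'', IsEdgeOf e'' P → e'' ⊆ H → (e'' ∩ e).Nonempty → e'' ≠ e → e'' ∩ e' = ∅

/-- A cap: a pentagonal facet `F₀` together with a surrounding 5-belt of pentagons. -/
def IsCapOf (P F₀ : Set E3) (L : Fin 5 → Set E3) : Prop :=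
  IsFacetOf F₀ P ∧ facetEdges P F₀ = 5 ∧ (∀ i, facetEdges P (L i) = 5) ∧
    IsBelt P L ∧ Surrounds P L F₀

/-- The number of 5-belts of `P` (counted as sets of facets). -/
def fiveBeltCount (P : Set E3) : ℕ :=
  {S : Set (Set E3) | ∃ B : Fin 5 → Set E3, IsBelt P B ∧ S = Set.range B}.ncard

/-- The structure of the `k`-th fullerene of Family I: two caps separated by `k`
hexagonal 5-belts, each bordering the next (for `k = 0` the caps border each other,
giving the dodecahedron). -/
def FamilyI (P : Set E3) (k : ℕ) : Prop :=
  ∃ (F₀ F₀' : Set E3) (L L' : Fin 5 → Set E3) (B : ℕ → Fin 5 → Set E3),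
    IsCapOf P F₀ L ∧ IsCapOf P F₀' L' ∧
    (∀ i < k, IsBelt P (B i) ∧ ∀ j, facetEdges P (B i j) = 6) ∧
    (∀ i, i + 1 < k → Borders P (B i) (B (i + 1))) ∧
    (0 < k → Borders P L (B 0) ∧ Borders P (B (k - 1)) L') ∧
    (k = 0 → Borders P L L') ∧
    facets P = {F₀, F₀'} ∪ Set.range L ∪ Set.range L' ∪ ⋃ i ∈ Set.Iio k, Set.range (B i)

/-- `P` is obtained from `Q` by an `(s,k;t₀,t₁)`-truncation with new edge `Enew`:
`P` is cut off from `Q` by a halfspace `{f ≤ c}` whose boundary plane crosses exactly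
two edges `E₀ ≠ E₁` of a `k`-gonal facet `F` of `Q`, cutting off exactly `s` vertices,
all belonging to `F`; `G₀` and `G₁` are the facets meeting `F` along `E₀` and `E₁`, and
they are `t₀`- and `t₁`-gons; `Enew` is the new edge dividing `F`. -/
def IsTruncation (s k t₀ t₁ : ℕ) (Q P Enew : Set E3) : Prop :=
  IsSimplePolytope3 Q ∧ IsSimplePolytope3 P ∧
    ∃ (F E₀ E₁ G₀ G₁ : Set E3) (f : E3 →ₗ[ℝ] ℝ) (c : ℝ),
      IsFacetOf F Q ∧ facetEdges Q F = k ∧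
      IsEdgeOf E₀ Q ∧ IsEdgeOf E₁ Q ∧ E₀ ≠ E₁ ∧ E₀ ⊆ F ∧ E₁ ⊆ F ∧
      IsFacetOf G₀ Q ∧ IsFacetOf G₁ Q ∧ G₀ ≠ F ∧ G₁ ≠ F ∧ E₀ ⊆ G₀ ∧ E₁ ⊆ G₁ ∧
      facetEdges Q G₀ = t₀ ∧ facetEdges Q G₁ = t₁ ∧
      P = Q ∩ {x | f x ≤ c} ∧
      (∀ e, IsEdgeOf e Q → (∃ x ∈ e, c < f x) → (∃ x ∈ e, f x < c) → e = E₀ ∨ e = E₁) ∧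
      (∃ x ∈ E₀, c < f x) ∧ (∃ x ∈ E₀, f x < c) ∧
      (∃ x ∈ E₁, c < f x) ∧ (∃ x ∈ E₁, f x < c) ∧
      (∀ v, IsVertexOf v Q → f v ≠ c) ∧
      {v | IsVertexOf v Q ∧ c < f v}.ncard = s ∧
      (∀ v, IsVertexOf v Q → c < f v → v ∈ F) ∧
      Enew = F ∩ {x | f x = c}

/-- Combinatorial equivalence of polytopes: an inclusion-preserving bijection
between the sets of faces. -/
def CombEquiv (P Q : Set E3) : Prop :=
  ∃ φ : {A : Set E3 // IsFaceOf A P} ≃ {A : Set E3 // IsFaceOf A Q},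
    ∀ A B : {A : Set E3 // IsFaceOf A P}, A.1 ⊆ B.1 ↔ (φ A).1 ⊆ (φ B).1

/-- Combinatorial equivalence sending the face `Ep` of `P` to the face `Eq` of `Q`. -/
def CombEquivMapping (P Q Ep Eq : Set E3) : Prop :=
  ∃ φ : {A : Set E3 // IsFaceOf A P} ≃ {A : Set E3 // IsFaceOf A Q},
    (∀ A B : {A : Set E3 // IsFaceOf A P}, A.1 ⊆ B.1 ↔ (φ A).1 ⊆ (φ B).1) ∧
    ∀ h : IsFaceOf Ep P, ((φ ⟨Ep, h⟩) : {A : Set E3 // IsFaceOf A Q}).1 = Eq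

/-- The straightening of `P` along the edge `E` is defined: `P` is combinatorially
obtained from some simple 3-polytope `Q` by an `(s,k)`-truncation whose new edge
corresponds to `E`. -/
def StraighteningDefined (P E : Set E3) : Prop :=
  ∃ (s k t₀ t₁ : ℕ) (Q P₁ E₁ : Set E3),
    IsTruncation s k t₀ t₁ Q P₁ E₁ ∧ CombEquivMapping P P₁ E E₁

/-- `P` is obtained from `Q` by one of the truncations
`(1;4,5)`, `(1;5,5)`, `(2,6;4,5)`, `(2,6;5,5)`, `(2,6;5,6)`, `(2,7;5,5)`, `(2,7;5,6)`. -/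
def FullereneStep (Q P : Set E3) : Prop :=
  ∃ (s k t₀ t₁ : ℕ) (Enew : Set E3), IsTruncation s k t₀ t₁ Q P Enew ∧
    ((s = 1 ∧ (({t₀, t₁} : Finset ℕ) = {4, 5} ∨ ({t₀, t₁} : Finset ℕ) = {5, 5})) ∨
     (s = 2 ∧ k = 6 ∧ (({t₀, t₁} : Finset ℕ) = {4, 5} ∨ ({t₀, t₁} : Finset ℕ) = {5, 5} ∨
        ({t₀, t₁} : Finset ℕ) = {5, 6})) ∨
     (s = 2 ∧ k = 7 ∧ (({t₀, t₁} : Finset ℕ) = {5, 5} ∨ ({t₀, t₁} : Finset ℕ) = {5, 6})))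

open Filter Topology

/-!
Cut a 3-belt of a simple polytope by a plane through interior points of its three edges. The plane
section is the triangle spanned by these points, so every other facet lies strictly on one side of
the plane. If all facets have at most six edges, each facet of the belt has at most four neighbours
outside the belt, so that on one of the two sides they are at most six in number, counted with
multiplicity. On this side, the facets adjacent to a facet of the belt form an arc, and two
consecutive arcs share an end, the facet at the vertex where two facets of the belt meet. The
lengths of the arcs are therefore `(1, 1, *)`, `(1, 2, 2)`, `(1, 2, 3)` or `(2, 2, 2)` up to order.
In the first two cases some facet is a triangle. In the other two, unless some facet is a triangle
or a quadrilateral, three facets above the plane form a 3-belt. Six of its at most twelve incidences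
with its neighbours involve facets of the old belt, so it can be cut by a plane with at most six
incidences strictly above it and with the old plane section strictly below it, and an infinite
descent ensues.
-/

/-! ### Convexity and polytopes -/

section Convexity

variable {E : Type*} [NormedAddCommGroup E] [NormedSpace ℝ E] {P F : Set E} {x z w : E}

theorem exists_mem_openSegment_of_mem_intrinsicInterior (hz : z ∈ intrinsicInterior ℝ F)
    (hw : w ∈ affineSpan ℝ F) : ∃ y ∈ F, z ∈ openSegment ℝ w y := by
  obtain ⟨z, hzF, rfl⟩ := mem_intrinsicInterior.1 hz
  let γ : ℝ → affineSpan ℝ F := fun t => ⟨AffineMap.lineMap z.1 w t, AffineMap.lineMap_mem t z.2 hw⟩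
  have hγ : Continuous γ := AffineMap.lineMap_continuous.subtype_mk _
  have hγ0 : γ 0 = z := Subtype.ext (AffineMap.lineMap_apply_zero _ _)
  have hnear : ∀ᶠ t in 𝓝 (0 : ℝ), γ t ∈ interior ((↑) ⁻¹' F : Set (affineSpan ℝ F)) :=
    hγ.continuousAt.eventually (isOpen_interior.mem_nhds (hγ0.symm ▸ hzF))
  obtain ⟨t, htF, ht : t < 0⟩ :=
    ((hnear.filter_mono nhdsWithin_le_nhds).and (self_mem_nhdsWithin (s := Iio (0 : ℝ)))).exists
  have ht' : 0 < 1 - t := by linarith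
  refine ⟨γ t, interior_subset (s := ((↑) ⁻¹' F : Set (affineSpan ℝ F))) htF,
    -t / (1 - t), 1 / (1 - t), div_pos (neg_pos.2 ht) ht', one_div_pos.2 ht',
    by field_simp; ring, ?_⟩
  simp only [γ, AffineMap.lineMap_apply_module]
  match_scalars <;> field_simp
  ring

theorem mem_of_mem_affineSpan_of_isExtreme (hF : IsExtreme ℝ P F)
    (hne : (intrinsicInterior ℝ F).Nonempty) (hwP : w ∈ P) (hw : w ∈ affineSpan ℝ F) : w ∈ F := by
  obtain ⟨z, hz⟩ := hne
  obtain ⟨y, hyF, hzy⟩ := exists_mem_openSegment_of_mem_intrinsicInterior hz hw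
  exact hF.left_mem_of_mem_openSegment hwP (hF.1 hyF) (intrinsicInterior_subset hz) hzy

theorem subset_of_mem_intrinsicInterior_of_isExtreme {A : Set E} (hF : IsExtreme ℝ P F)
    (hA : A ⊆ P) (hz : z ∈ intrinsicInterior ℝ A) (hzF : z ∈ F) : A ⊆ F := by
  intro w hw
  obtain ⟨y, hy, hzy⟩ :=
    exists_mem_openSegment_of_mem_intrinsicInterior hz (subset_affineSpan ℝ A hw)
  exact hF.left_mem_of_mem_openSegment (hA hw) (hA hy) hzF hzy

theorem eq_of_subset_of_finrank_vectorSpan_le [FiniteDimensional ℝ E] {F' : Set E}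
    (hF : IsExtreme ℝ P F) (hconv : Convex ℝ F) (hne : F.Nonempty) (hsub : F ⊆ F') (hF' : F' ⊆ P)
    (hdim : Module.finrank ℝ (vectorSpan ℝ F') ≤ Module.finrank ℝ (vectorSpan ℝ F)) :
    F = F' := by
  have hdir : vectorSpan ℝ F = vectorSpan ℝ F' :=
    Submodule.eq_of_le_of_finrank_le (vectorSpan_mono ℝ hsub) hdim
  have hspan : affineSpan ℝ F = affineSpan ℝ F' :=
    AffineSubspace.eq_of_direction_eq_of_nonempty_of_le
      (by rw [direction_affineSpan, direction_affineSpan, hdir]) (hne.mono (subset_affineSpan ℝ F))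
      (affineSpan_mono ℝ hsub)
  exact hsub.antisymm fun x hx => mem_of_mem_affineSpan_of_isExtreme hF
    (hne.intrinsicInterior hconv) (hF' hx) (hspan ▸ subset_affineSpan ℝ F' hx)

theorem exists_mem_of_mem_convexHull_of_isExtreme {S : Set E} (hP : Convex ℝ P)
    (hF : IsExtreme ℝ P F) (hS : S ⊆ P) (hx : x ∈ convexHull ℝ S) (hxF : x ∈ F) :
    ∃ s ∈ S, s ∈ F := by
  by_contra! h
  have hsub : convexHull ℝ S ⊆ P \ F :=
    convexHull_min (fun s hs => ⟨hS hs, h s hs⟩) (hF.convex_sdiff hP)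
  exact (hsub hx).2 hxF

theorem not_wbtw_of_mem_extremePoints {a b c : E} (hb : b ∈ P.extremePoints ℝ) (ha : a ∈ P)
    (hc : c ∈ P) (hab : a ≠ b) (hcb : c ≠ b) : ¬ Wbtw ℝ a b c := fun h =>
  ((mem_extremePoints_iff_forall_segment.1 hb).2 a ha c hc (mem_segment_iff_wbtw.2 h)).elim hab hcb

theorem exists_mem_openSegment_notMem_interior (hP : IsClosed P) (hz : z ∈ interior P)
    (hx : x ∉ P) : ∃ y ∈ openSegment ℝ z x, y ∈ P ∧ y ∉ interior P := by
  have hcover : ¬ segment ℝ z x ⊆ interior P ∪ Pᶜ := fun h => by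
    obtain ⟨y, -, hy, hyP⟩ := (convex_segment z x).isPreconnected _ _ isOpen_interior
      hP.isOpen_compl h ⟨z, left_mem_segment ℝ z x, hz⟩ ⟨x, right_mem_segment ℝ z x, hx⟩
    exact hyP (interior_subset hy)
  obtain ⟨y, hy, hyn⟩ := not_subset.1 hcover
  have hyP : y ∈ P := by_contra fun h => hyn (Or.inr h)
  have hyi : y ∉ interior P := fun h => hyn (Or.inl h)
  exact ⟨y, mem_openSegment_of_ne_left_right (fun h => hyi (h ▸ hz)) (fun h => hx (h ▸ hyP)) hy,
    hyP, hyi⟩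

theorem apply_le_of_forall_mem_interior_lt (hP : Convex ℝ P) (hne : (interior P).Nonempty)
    {f : StrongDual ℝ E} {c : ℝ} (h : ∀ y ∈ interior P, f y < c) (hx : x ∈ P) : f x ≤ c := by
  have hcl : x ∈ closure (interior P) := by
    rw [hP.closure_interior_eq_closure_of_nonempty_interior hne]
    exact subset_closure hx
  exact closure_minimal (fun y hy => (h y hy).le) (isClosed_le f.continuous continuous_const) hcl

end Convexity

section Simplex

variable {E ι : Type*} [AddCommGroup E] [Module ℝ E] {m : ι → E}
  {u : ι → Module.Dual ℝ E} {b : ι → ℝ}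

theorem ne_zero_of_apply_ne {f : Module.Dual ℝ E} {x y : E} (h : f x ≠ f y) : f ≠ 0 := by
  rintro rfl
  exact h rfl

theorem apply_sum_smul_of_eq_of_ne (heq : ∀ i j, j ≠ i → u i (m j) = b i) (s : Finset ι)
    (w : ι → ℝ) {i : ι} (hi : i ∈ s) :
    u i (∑ j ∈ s, w j • m j) = b i * ∑ j ∈ s, w j - w i * (b i - u i (m i)) := by
  classical
  rw [map_sum, ← Finset.add_sum_erase s w hi, ← Finset.add_sum_erase s _ hi, mul_add,
    Finset.mul_sum, Finset.sum_congr rfl fun j hj => by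
      rw [map_smul, heq i j (Finset.ne_of_mem_erase hj), smul_eq_mul, mul_comm],
    map_smul, smul_eq_mul]
  ring

theorem affineIndependent_of_eq_of_ne (heq : ∀ i j, j ≠ i → u i (m j) = b i)
    (hlt : ∀ i, u i (m i) < b i) : AffineIndependent ℝ m := by
  rw [affineIndependent_iff]
  intro s w hw hwm i hi
  have h := apply_sum_smul_of_eq_of_ne heq s w hi
  rw [hwm, hw, map_zero, mul_zero, zero_sub, zero_eq_neg] at h
  exact (mul_eq_zero.1 h).resolve_right (sub_pos.2 (hlt i)).ne'

theorem mem_convexHull_range_of_le [Fintype ι] [FiniteDimensional ℝ E]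
    (hcard : Fintype.card ι = Module.finrank ℝ E) {f : Module.Dual ℝ E} (hf : f ≠ 0) {c : ℝ}
    (hm : ∀ i, f (m i) = c) (heq : ∀ i j, j ≠ i → u i (m j) = b i) (hlt : ∀ i, u i (m i) < b i)
    {x : E} (hx : f x = c) (hxu : ∀ i, u i x ≤ b i) : x ∈ convexHull ℝ (range m) := by
  have hind := affineIndependent_of_eq_of_ne heq hlt
  have hker := Module.Dual.finrank_ker_add_one_of_ne_zero hf
  have hspan : vectorSpan ℝ (range m) = LinearMap.ker f := by
    refine Submodule.eq_of_le_of_finrank_eq ?_ (hind.finrank_vectorSpan (by omega))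
    rw [vectorSpan_def, Submodule.span_le]
    rintro _ ⟨_, ⟨i, rfl⟩, _, ⟨j, rfl⟩, rfl⟩
    simp [hm]
  obtain ⟨i₀⟩ : Nonempty ι := Fintype.card_pos_iff.1 (by omega)
  have hxspan : x ∈ affineSpan ℝ (range m) := by
    rw [← AffineSubspace.vsub_right_mem_direction_iff_mem
      (mem_affineSpan ℝ (mem_range_self i₀)), direction_affineSpan, hspan]
    simp [hx, hm]
  obtain ⟨w, hw, rfl⟩ := eq_affineCombination_of_mem_affineSpan_of_fintype hxspan
  refine affineCombination_mem_convexHull (fun i _ => ?_) hw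
  have h := hxu i
  rw [Finset.affineCombination_eq_linear_combination _ _ _ hw,
    apply_sum_smul_of_eq_of_ne heq _ _ (Finset.mem_univ i), hw] at h
  nlinarith [hlt i]

end Simplex

theorem isVertexOf_iff_mem_extremePoints {v : E3} {P : Set E3} :
    IsVertexOf v P ↔ v ∈ P.extremePoints ℝ := by
  simp [IsVertexOf, IsFaceOf, isExtreme_singleton]

theorem IsVertexOf.mem {v : E3} {P : Set E3} (hv : IsVertexOf v P) : v ∈ P :=
  (isVertexOf_iff_mem_extremePoints.1 hv).1

theorem IsFaceOf.subset {F P : Set E3} (hF : IsFaceOf F P) : F ⊆ P := hF.2.2.2.1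

theorem IsFacetOf.subset {F P : Set E3} (hF : IsFacetOf F P) : F ⊆ P := hF.1.subset

theorem IsFaceOf.inter {F G P : Set E3} (hF : IsFaceOf F P) (hG : IsFaceOf G P)
    (hne : (F ∩ G).Nonempty) : IsFaceOf (F ∩ G) P :=
  ⟨hne, hF.2.1.inter hG.2.1, hF.2.2.1.inter hG.2.2.1, hF.2.2.2.inter hG.2.2.2⟩

theorem IsFaceOf.eq_of_subset {F G P : Set E3} (hF : IsFaceOf F P) (hFG : F ⊆ G) (hG : G ⊆ P)
    (hdim : setDim G ≤ setDim F) : F = G :=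
  eq_of_subset_of_finrank_vectorSpan_le hF.2.2.2 hF.2.2.1 hF.1 hFG hG hdim

theorem isFaceOf_setOf_apply_eq {P : Set E3} (hP : IsClosed P) (hconv : Convex ℝ P)
    (f : StrongDual ℝ E3) {c : ℝ} (hle : ∀ x ∈ P, f x ≤ c) {y : E3} (hy : y ∈ P) (hyc : f y = c) :
    IsFaceOf {x ∈ P | f x = c} P := by
  have heq : {x ∈ P | f x = c} = f.toExposed P := by
    ext x
    exact and_congr_right fun hx =>
      ⟨fun h a ha => h ▸ hle a ha, fun h => (hle x hx).antisymm (hyc ▸ h y hy)⟩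
  have hexp : IsExposed ℝ P {x ∈ P | f x = c} :=
    heq ▸ ContinuousLinearMap.toExposed.isExposed
  exact ⟨⟨y, hy, hyc⟩, hexp.isClosed hP, hexp.convex hconv, hexp.isExtreme⟩

theorem setDim_le_two_of_apply_eq {A : Set E3} {f : Module.Dual ℝ E3} (hf : f ≠ 0) {c : ℝ}
    (hA : ∀ x ∈ A, f x = c) : setDim A ≤ 2 := by
  have hker := Module.Dual.finrank_ker_add_one_of_ne_zero hf
  have hle : vectorSpan ℝ A ≤ LinearMap.ker f := by
    rw [vectorSpan_def, Submodule.span_le]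
    rintro _ ⟨x, hx, y, hy, rfl⟩
    simp [hA x hx, hA y hy]
  have := Submodule.finrank_mono hle
  rw [finrank_euclideanSpace_fin] at hker
  unfold setDim
  omega

namespace IsPolytope

variable {P F : Set E3}

theorem isCompact (hP : IsPolytope P) : IsCompact P := by
  obtain ⟨V, rfl⟩ := hP
  exact V.finite_toSet.isCompact_convexHull ℝ

theorem convex (hP : IsPolytope P) : Convex ℝ P := by
  obtain ⟨V, rfl⟩ := hP
  exact convex_convexHull ℝ _

theorem finite_vertices (hP : IsPolytope P) : {v | IsVertexOf v P}.Finite := by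
  obtain ⟨V, rfl⟩ := hP
  exact V.finite_toSet.subset fun v hv =>
    extremePoints_convexHull_subset (isVertexOf_iff_mem_extremePoints.1 hv)

theorem face_eq_convexHull_vertices (hP : IsPolytope P) (hF : IsFaceOf F P) :
    F = convexHull ℝ {v | IsVertexOf v P ∧ v ∈ F} := by
  have hext : F.extremePoints ℝ = {v | IsVertexOf v P ∧ v ∈ F} := by
    ext v
    rw [hF.2.2.2.extremePoints_eq, mem_inter_iff, and_comm, ← isVertexOf_iff_mem_extremePoints]
    rfl
  have hfin : {v | IsVertexOf v P ∧ v ∈ F}.Finite := hP.finite_vertices.subset fun v hv => hv.1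
  have hhull := closure_convexHull_extremePoints
    (hP.isCompact.of_isClosed_subset hF.2.1 hF.subset) hF.2.2.1
  rw [hext, (hfin.isClosed_convexHull ℝ).closure_eq] at hhull
  exact hhull.symm

theorem exists_vertex_le_apply (hP : IsPolytope P) (hF : IsFaceOf F P) (f : Module.Dual ℝ E3)
    {x : E3} (hx : x ∈ F) : ∃ v, IsVertexOf v P ∧ v ∈ F ∧ f x ≤ f v := by
  by_contra! h
  have hsub : convexHull ℝ {v | IsVertexOf v P ∧ v ∈ F} ⊆ {y | f y < f x} :=
    convexHull_min (fun v hv => h v hv.1 hv.2) (convex_halfSpace_lt f.isLinear _)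
  rw [← hP.face_eq_convexHull_vertices hF] at hsub
  exact lt_irrefl (f x) (hsub hx)

theorem exists_vertex_mem_face (hP : IsPolytope P) (hF : IsFaceOf F P) :
    ∃ v, IsVertexOf v P ∧ v ∈ F := by
  obtain ⟨x, hx⟩ := hF.1
  obtain ⟨v, hv, hvF, -⟩ := hP.exists_vertex_le_apply hF 0 hx
  exact ⟨v, hv, hvF⟩

theorem finite_faces (hP : IsPolytope P) : {F | IsFaceOf F P}.Finite :=
  (hP.finite_vertices.finite_subsets.image (convexHull ℝ)).subset fun F hF =>
    ⟨{v | IsVertexOf v P ∧ v ∈ F}, fun _ hv => hv.1, (hP.face_eq_convexHull_vertices hF).symm⟩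

theorem finite_facets (hP : IsPolytope P) : {F | IsFacetOf F P}.Finite :=
  hP.finite_faces.subset fun _ hF => hF.1

theorem interior_nonempty (hP : IsPolytope P) (hdim : setDim P = 3) : (interior P).Nonempty := by
  have hne : P.Nonempty := by
    rw [nonempty_iff_ne_empty]
    rintro rfl
    rw [setDim, vectorSpan_empty, finrank_bot] at hdim
    omega
  rw [hP.convex.interior_nonempty_iff_affineSpan_eq_top,
    AffineSubspace.affineSpan_eq_top_iff_vectorSpan_eq_top_of_nonempty ℝ E3 E3 hne]
  exact Submodule.eq_top_of_finrank_eq (hdim.trans finrank_euclideanSpace_fin.symm)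

end IsPolytope

/-- The plane `u = b` supports `P` along `F`, with `P` in the half-space `u ≤ b`; the last
condition rules out a plane containing all of `P`. -/
structure Supports (P F : Set E3) (u : Module.Dual ℝ E3) (b : ℝ) : Prop where
  le : ∀ x ∈ P, u x ≤ b
  mem_iff : ∀ x, x ∈ F ↔ x ∈ P ∧ u x = b
  lt_of_mem_interior : ∀ x ∈ interior P, u x < b

namespace Supports

variable {P F : Set E3} {u : Module.Dual ℝ E3} {b : ℝ} {x y : E3}

theorem apply_eq (h : Supports P F u b) (hx : x ∈ F) : u x = b := ((h.mem_iff x).1 hx).2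

theorem lt (h : Supports P F u b) (hx : x ∈ P) (hxF : x ∉ F) : u x < b :=
  (h.le x hx).lt_of_ne fun hxb => hxF ((h.mem_iff x).2 ⟨hx, hxb⟩)

theorem apply_sub_eq_zero (h : Supports P F u b) (hx : x ∈ F) (hy : y ∈ F) : u (x - y) = 0 := by
  rw [map_sub, h.apply_eq hx, h.apply_eq hy, sub_self]

theorem ne_zero (h : Supports P F u b) (hP : (interior P).Nonempty) (hx : x ∈ F) : u ≠ 0 := by
  obtain ⟨z, hz⟩ := hP
  exact ne_zero_of_apply_ne ((h.lt_of_mem_interior z hz).trans_eq (h.apply_eq hx).symm).ne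

end Supports

namespace IsPolytope

variable {P F : Set E3}

theorem exists_supports (hP : IsPolytope P) (hdim : setDim P = 3) (hF : IsFacetOf F P) :
    ∃ u b, Supports P F u b := by
  have hdisj : Disjoint (interior P) F := by
    rw [Set.disjoint_left]
    intro z hz hzF
    have hPF := subset_of_mem_intrinsicInterior_of_isExtreme hF.1.2.2.2 subset_rfl
      (interior_subset_intrinsicInterior hz) hzF
    have := hF.2
    rw [hF.subset.antisymm hPF, hdim] at this
    omega
  obtain ⟨f, c, hlt, hge⟩ :=
    geometric_hahn_banach_open hP.convex.interior isOpen_interior hF.1.2.2.1 hdisj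
  have hle : ∀ x ∈ P, f x ≤ c := fun x hx =>
    apply_le_of_forall_mem_interior_lt hP.convex (hP.interior_nonempty hdim) hlt hx
  have hsub : F ⊆ {x ∈ P | f x = c} := fun x hx =>
    ⟨hF.subset hx, (hle x (hF.subset hx)).antisymm (hge x hx)⟩
  obtain ⟨z, hz⟩ := hP.interior_nonempty hdim
  obtain ⟨y, hy⟩ := hF.1.1
  have hf : f.toLinearMap ≠ 0 := ne_zero_of_apply_ne ((hlt z hz).trans_le (hge y hy)).ne
  have heq := hF.1.eq_of_subset hsub (sep_subset _ _)
    (hF.2 ▸ setDim_le_two_of_apply_eq hf fun x hx => hx.2)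
  exact ⟨f.toLinearMap, c, hle, fun x => by rw [heq]; rfl, hlt⟩

theorem exists_mem_interior_forall_notMem_affineSpan (hP : IsPolytope P) (hdim : setDim P = 3)
    (x : E3) : ∃ z ∈ interior P, ∀ F, IsFaceOf F P → setDim F ≤ 1 →
      z ∉ affineSpan ℝ (insert x F) := by
  by_contra! hcon
  have hsub : interior P ⊆ ⋃ F ∈ {F | IsFaceOf F P ∧ setDim F ≤ 1},
      (affineSpan ℝ (insert x F) : Set E3) := by
    intro z hz
    obtain ⟨F, hF, hF1, hzF⟩ := hcon z hz
    exact mem_biUnion (show F ∈ {F | IsFaceOf F P ∧ setDim F ≤ 1} from ⟨hF, hF1⟩) hzF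
  have hnull : MeasureTheory.volume (⋃ F ∈ {F | IsFaceOf F P ∧ setDim F ≤ 1},
      (affineSpan ℝ (insert x F) : Set E3)) = 0 := by
    rw [MeasureTheory.measure_biUnion_null_iff
      (hP.finite_faces.subset fun _ hF => hF.1).countable]
    rintro F ⟨-, hF1⟩
    refine MeasureTheory.Measure.addHaar_affineSubspace _ _ fun htop => ?_
    have hle := finrank_vectorSpan_insert_le_set ℝ F x
    rw [← direction_affineSpan, htop, AffineSubspace.direction_top, finrank_top,
      finrank_euclideanSpace_fin] at hle
    unfold setDim at hF1
    omega
  exact (isOpen_interior.measure_pos _ (hP.interior_nonempty hdim)).ne'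
    (MeasureTheory.measure_mono_null hsub hnull)

/-- The half-space representation of `P`. Joining an outside point `x` to a generic interior point
of `P`, the segment leaves `P` through a facet, whose plane separates `x` from `P`. -/
theorem exists_facet_lt_apply (hP : IsPolytope P) (hdim : setDim P = 3) {x : E3} (hx : x ∉ P) :
    ∃ F, IsFacetOf F P ∧ ∀ u b, Supports P F u b → b < u x := by
  obtain ⟨z, hz, hgen⟩ := hP.exists_mem_interior_forall_notMem_affineSpan hdim x
  obtain ⟨y, hy, hyP, hyi⟩ := exists_mem_openSegment_notMem_interior hP.isCompact.isClosed hz hx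
  obtain ⟨f, hf⟩ := geometric_hahn_banach_open_point hP.convex.interior isOpen_interior hyi
  have hle : ∀ a ∈ P, f a ≤ f y := fun a ha =>
    apply_le_of_forall_mem_interior_lt hP.convex (hP.interior_nonempty hdim) hf ha
  have hface := isFaceOf_setOf_apply_eq hP.isCompact.isClosed hP.convex f hle hyP rfl
  have hf0 : f.toLinearMap ≠ 0 := ne_zero_of_apply_ne (hf z hz).ne
  have hdim_ge : 2 ≤ setDim {a ∈ P | f a = f y} := by
    by_contra! hlt
    refine hgen _ hface (by omega) ?_
    have hline : z ∈ line[ℝ, x, y] := (mem_segment_iff_wbtw.1 (openSegment_subset_segment ℝ z x hy)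
      ).left_mem_affineSpan_of_right_ne fun h => hx (h ▸ hyP)
    have hyG : y ∈ {a ∈ P | f a = f y} := ⟨hyP, rfl⟩
    exact affineSpan_mono ℝ (insert_subset_insert (singleton_subset_iff.2 hyG)) hline
  refine ⟨_, ⟨hface, (setDim_le_two_of_apply_eq hf0 fun a ha => ha.2).antisymm hdim_ge⟩,
    fun u b hu => ?_⟩
  have hyb : u y = b := hu.apply_eq ⟨hyP, rfl⟩
  obtain ⟨s, t, hs, ht, hst, rfl⟩ := hy
  rw [map_add, map_smul, map_smul, smul_eq_mul, smul_eq_mul] at hyb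
  have hzb := mul_pos hs (sub_pos.2 (hu.lt_of_mem_interior z hz))
  by_contra! hxb
  have hxb := mul_nonneg ht.le (sub_nonneg.2 hxb)
  obtain rfl : s = 1 - t := by linarith
  linarith

theorem eventually_add_smul_mem (hP : IsPolytope P) (hdim : setDim P = 3) {v d : E3} (hv : v ∈ P)
    (hd : ∀ F, IsFacetOf F P → v ∈ F → ∃ u b, Supports P F u b ∧ u d ≤ 0) :
    ∀ᶠ t : ℝ in 𝓝[>] 0, v + t • d ∈ P := by
  have hfacet : ∀ F ∈ {F | IsFacetOf F P}, ∀ᶠ t : ℝ in 𝓝[>] 0,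
      ∃ u b, Supports P F u b ∧ u (v + t • d) ≤ b := by
    intro F hF
    by_cases hvF : v ∈ F
    · obtain ⟨u, b, hu, hud⟩ := hd F hF hvF
      filter_upwards [self_mem_nhdsWithin] with t (ht : 0 < t)
      refine ⟨u, b, hu, ?_⟩
      rw [map_add, map_smul, hu.apply_eq hvF, smul_eq_mul]
      nlinarith
    · obtain ⟨u, b, hu⟩ := hP.exists_supports hdim hF
      have hcont : Continuous fun t : ℝ => u (v + t • d) := by
        simp only [map_add, map_smul]
        fun_prop
      have hlt : ∀ᶠ t : ℝ in 𝓝 0, u (v + t • d) < b := by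
        refine hcont.continuousAt.eventually_lt_const ?_
        simpa using hu.lt hv hvF
      exact (hlt.filter_mono nhdsWithin_le_nhds).mono fun t ht => ⟨u, b, hu, ht.le⟩
  filter_upwards [hP.finite_facets.eventually_all.2 hfacet] with t ht
  by_contra hmem
  obtain ⟨F, hF, hlt⟩ := hP.exists_facet_lt_apply hdim hmem
  obtain ⟨u, b, hu, hle⟩ := ht F hF
  exact hle.not_gt (hlt u b hu)

/-- For small `t > 0` both `z + t • k` and `z - t • k` lie in `P`, and `F` is extreme. -/
theorem mem_vectorSpan_of_apply_eq_zero (hP : IsPolytope P) (hdim : setDim P = 3)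
    (hF : IsFaceOf F P) {z k : E3} (hz : z ∈ F)
    (hk : ∀ G, IsFacetOf G P → z ∈ G → ∃ u b, Supports P G u b ∧ u k = 0) :
    k ∈ vectorSpan ℝ F := by
  have hplus := hP.eventually_add_smul_mem hdim (hF.subset hz) fun G hG hzG => by
    obtain ⟨u, b, hu, huk⟩ := hk G hG hzG
    exact ⟨u, b, hu, huk.le⟩
  have hminus := hP.eventually_add_smul_mem (d := -k) hdim (hF.subset hz) fun G hG hzG => by
    obtain ⟨u, b, hu, huk⟩ := hk G hG hzG
    exact ⟨u, b, hu, by rw [map_neg, huk, neg_zero]⟩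
  obtain ⟨t, ⟨htp, htm⟩, ht : 0 < t⟩ := ((hplus.and hminus).and self_mem_nhdsWithin).exists
  have hmid : z ∈ openSegment ℝ (z + t • k) (z + t • -k) :=
    ⟨1 / 2, 1 / 2, by norm_num, by norm_num, by norm_num, by module⟩
  have htF : z + t • k ∈ F := hF.2.2.2.left_mem_of_mem_openSegment htp htm hz hmid
  have hmem := vsub_mem_vectorSpan ℝ htF hz
  rw [vsub_eq_sub, add_sub_cancel_left] at hmem
  exact (Submodule.smul_mem_iff _ ht.ne').1 hmem

/-- Inside the plane `f = c`, the three facet planes bound the triangle with corners `m i`. -/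
theorem mem_convexHull_range_of_apply_eq (hP : IsPolytope P) (hdim : setDim P = 3)
    {T : Fin 3 → Set E3} (hT : ∀ i, IsFacetOf (T i) P) {f : Module.Dual ℝ E3} (hf : f ≠ 0) {c : ℝ}
    {m : Fin 3 → E3} (hmP : ∀ i, m i ∈ P) (hmc : ∀ i, f (m i) = c)
    (hmT : ∀ i j, m i ∈ T j ↔ j ≠ i) {x : E3} (hxP : x ∈ P) (hxc : f x = c) :
    x ∈ convexHull ℝ (range m) := by
  choose u b hu using fun i => hP.exists_supports hdim (hT i)
  exact mem_convexHull_range_of_le (by simp) hf hmc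
    (fun i j hji => (hu i).apply_eq ((hmT j i).2 hji.symm))
    (fun i => (hu i).lt (hmP i) fun h => (hmT i i).1 h rfl) hxc fun i => (hu i).le x hxP

theorem exists_mem_of_apply_eq (hP : IsPolytope P) (hdim : setDim P = 3) {T : Fin 3 → Set E3}
    (hT : ∀ i, IsFacetOf (T i) P) {f : Module.Dual ℝ E3} (hf : f ≠ 0) {c : ℝ} {m : Fin 3 → E3}
    (hmP : ∀ i, m i ∈ P) (hmc : ∀ i, f (m i) = c) (hmT : ∀ i j, m i ∈ T j ↔ j ≠ i)
    (hF : IsFaceOf F P) {x : E3} (hxF : x ∈ F) (hxc : f x = c) : ∃ i, m i ∈ F := by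
  obtain ⟨_, ⟨i, rfl⟩, hi⟩ := exists_mem_of_mem_convexHull_of_isExtreme hP.convex hF.2.2.2
    (range_subset_iff.2 hmP)
    (hP.mem_convexHull_range_of_apply_eq hdim hT hf hmP hmc hmT (hF.subset hxF) hxc) hxF
  exact ⟨i, hi⟩

end IsPolytope

/-! ### Simple polytopes -/

/-- The facets meeting `F` other than `F` itself. In a simple polytope they correspond to the edges
of `F`. -/
def adjFacets (P F : Set E3) : Set (Set E3) := {G | IsFacetOf G P ∧ G ≠ F ∧ (F ∩ G).Nonempty}

/-- `F`, `G`, `H` are distinct facets with a common point. In a simple polytope this point is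
a vertex, and every vertex arises in this way. -/
structure MeetAtVertex (P F G H : Set E3) : Prop where
  isFacetOf_fst : IsFacetOf F P
  isFacetOf_snd : IsFacetOf G P
  isFacetOf_trd : IsFacetOf H P
  fst_ne_snd : F ≠ G
  fst_ne_trd : F ≠ H
  snd_ne_trd : G ≠ H
  nonempty : (F ∩ G ∩ H).Nonempty

namespace MeetAtVertex

variable {P F G H : Set E3}

theorem rotate (h : MeetAtVertex P F G H) : MeetAtVertex P G H F where
  isFacetOf_fst := h.isFacetOf_snd
  isFacetOf_snd := h.isFacetOf_trd
  isFacetOf_trd := h.isFacetOf_fst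
  fst_ne_snd := h.snd_ne_trd
  fst_ne_trd := h.fst_ne_snd.symm
  snd_ne_trd := h.fst_ne_trd.symm
  nonempty := by rw [inter_comm, ← inter_assoc]; exact h.nonempty

theorem swap (h : MeetAtVertex P F G H) : MeetAtVertex P F H G where
  isFacetOf_fst := h.isFacetOf_fst
  isFacetOf_snd := h.isFacetOf_trd
  isFacetOf_trd := h.isFacetOf_snd
  fst_ne_snd := h.fst_ne_trd
  fst_ne_trd := h.fst_ne_snd
  snd_ne_trd := h.snd_ne_trd.symm
  nonempty := inter_right_comm F G H ▸ h.nonempty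

theorem snd_mem_adjFacets (h : MeetAtVertex P F G H) : G ∈ adjFacets P F :=
  ⟨h.isFacetOf_snd, h.fst_ne_snd.symm, h.nonempty.mono inter_subset_left⟩

theorem trd_mem_adjFacets (h : MeetAtVertex P F G H) : H ∈ adjFacets P F := h.swap.snd_mem_adjFacets

theorem isFaceOf_inter (h : MeetAtVertex P F G H) : IsFaceOf (F ∩ G ∩ H) P :=
  (h.isFacetOf_fst.1.inter h.isFacetOf_snd.1 (h.nonempty.mono inter_subset_left)).inter
    h.isFacetOf_trd.1 h.nonempty

end MeetAtVertex

theorem ncard_vertices_edge {P e : Set E3} (hP : IsPolytope P) (he : IsEdgeOf e P) :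
    {v | IsVertexOf v P ∧ v ∈ e}.ncard = 2 := by
  have hfin : {v | IsVertexOf v P ∧ v ∈ e}.Finite := hP.finite_vertices.subset fun _ hv => hv.1
  have : Finite {v | IsVertexOf v P ∧ v ∈ e} := hfin
  refine le_antisymm ?_ ?_
  · by_contra! hlt
    obtain ⟨a, b, c, ⟨ha, hae⟩, ⟨hb, hbe⟩, ⟨hc, hce⟩, hab, hac, hbc⟩ :=
      (two_lt_ncard_iff hfin).1 hlt
    have hcol : Collinear ℝ {a, b, c} :=
      (collinear_iff_finrank_le_one.2 he.2.le).subset (by simp [insert_subset_iff, hae, hbe, hce])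
    rw [isVertexOf_iff_mem_extremePoints] at ha hb hc
    rcases hcol.wbtw_or_wbtw_or_wbtw with h | h | h
    · exact not_wbtw_of_mem_extremePoints hb ha.1 hc.1 hab hbc.symm h
    · exact not_wbtw_of_mem_extremePoints hc hb.1 ha.1 hbc hac h
    · exact not_wbtw_of_mem_extremePoints ha hc.1 hb.1 hac.symm hab.symm h
  · by_contra! hlt
    have hsub := (ncard_le_one_iff_subsingleton (s := {v | IsVertexOf v P ∧ v ∈ e})).1
      (by omega)
    have hdim := he.2
    rw [setDim, hP.face_eq_convexHull_vertices he.1, hsub.convex.convexHull_eq,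
      vectorSpan_of_subsingleton ℝ hsub, finrank_bot] at hdim
    omega

namespace IsSimplePolytope3

variable {P F G H : Set E3} {v x y : E3}

theorem isPolytope (hP : IsSimplePolytope3 P) : IsPolytope P := hP.1

theorem finite_facets_through (hP : IsSimplePolytope3 P) (v : E3) :
    {X | IsFacetOf X P ∧ v ∈ X}.Finite :=
  hP.isPolytope.finite_facets.subset fun _ hX => hX.1

theorem finite_adjFacets (hP : IsSimplePolytope3 P) (F : Set E3) : (adjFacets P F).Finite :=
  hP.isPolytope.finite_facets.subset fun _ hX => hX.1

theorem exists_meetAtVertex (hP : IsSimplePolytope3 P) (hv : IsVertexOf v P)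
    (hF : IsFacetOf F P) (hG : IsFacetOf G P) (hFG : F ≠ G) (hvF : v ∈ F) (hvG : v ∈ G) :
    ∃ H, v ∈ H ∧ MeetAtVertex P F G H := by
  obtain ⟨H, ⟨hH, hvH⟩, hne⟩ :=
    exists_mem_notMem_of_ncard_lt_ncard (s := {F, G}) (t := {X | IsFacetOf X P ∧ v ∈ X})
      (by rw [hP.2.2 v hv, ncard_pair hFG]; omega)
  simp only [mem_insert_iff, mem_singleton_iff, not_or] at hne
  exact ⟨H, hvH, hF, hG, hH, hFG, Ne.symm hne.1, Ne.symm hne.2, v, ⟨hvF, hvG⟩, hvH⟩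

theorem setOf_facets_through_vertex (hP : IsSimplePolytope3 P) (hv : IsVertexOf v P)
    (h : MeetAtVertex P F G H) (hvh : v ∈ F ∩ G ∩ H) :
    {X | IsFacetOf X P ∧ v ∈ X} = {F, G, H} := by
  refine (eq_of_subset_of_ncard_le ?_ ?_ (hP.finite_facets_through v)).symm
  · rintro X (rfl | rfl | rfl)
    exacts [⟨h.isFacetOf_fst, hvh.1.1⟩, ⟨h.isFacetOf_snd, hvh.1.2⟩, ⟨h.isFacetOf_trd, hvh.2⟩]
  · rw [hP.2.2 v hv, ncard_eq_three.2 ⟨F, G, H, h.fst_ne_snd, h.fst_ne_trd, h.snd_ne_trd, rfl⟩]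

theorem exists_inter_eq_singleton (hP : IsSimplePolytope3 P) (h : MeetAtVertex P F G H) :
    ∃ v, IsVertexOf v P ∧ F ∩ G ∩ H = {v} := by
  obtain ⟨v, hv, hvh⟩ := hP.isPolytope.exists_vertex_mem_face h.isFaceOf_inter
  refine ⟨v, hv, (subset_singleton_iff.2 fun x hx => ?_).antisymm (singleton_subset_iff.2 hvh)⟩
  have hmem : x - v ∈ vectorSpan ℝ {v} :=
    hP.isPolytope.mem_vectorSpan_of_apply_eq_zero hP.2.1 hv rfl fun X hX hvX => by
      obtain ⟨u, b, hu⟩ := hP.isPolytope.exists_supports hP.2.1 hX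
      have hXmem : X ∈ ({F, G, H} : Set (Set E3)) :=
        hP.setOf_facets_through_vertex hv h hvh ▸ ⟨hX, hvX⟩
      refine ⟨u, b, hu, hu.apply_sub_eq_zero ?_ hvX⟩
      rcases hXmem with rfl | rfl | rfl
      exacts [hx.1.1, hx.1.2, hx.2]
  rwa [vectorSpan_singleton, Submodule.mem_bot, sub_eq_zero] at hmem

theorem subsingleton_inter (hP : IsSimplePolytope3 P) (h : MeetAtVertex P F G H) :
    (F ∩ G ∩ H).Subsingleton := by
  obtain ⟨v, -, hv⟩ := hP.exists_inter_eq_singleton h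
  exact hv ▸ subsingleton_singleton

theorem isVertexOf_of_mem_inter (hP : IsSimplePolytope3 P) (h : MeetAtVertex P F G H)
    (hx : x ∈ F ∩ G ∩ H) : IsVertexOf x P := by
  obtain ⟨v, hv, heq⟩ := hP.exists_inter_eq_singleton h
  rw [heq] at hx
  exact (mem_singleton_iff.1 hx) ▸ hv

theorem mem_iff_of_mem_inter (hP : IsSimplePolytope3 P) (h : MeetAtVertex P F G H)
    (hx : x ∈ F ∩ G ∩ H) {X : Set E3} (hX : IsFacetOf X P) :
    x ∈ X ↔ X = F ∨ X = G ∨ X = H := by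
  have heq := hP.setOf_facets_through_vertex (hP.isVertexOf_of_mem_inter h hx) h hx
  have := Set.ext_iff.1 heq X
  simpa only [mem_ofPred_eq, hX, true_and, mem_insert_iff, mem_singleton_iff] using this

/-- At a vertex of `F ∩ G`, moving along the line of intersection of the two facet planes, into
the half-space of the third facet, stays in `P`. -/
theorem nontrivial_inter (hP : IsSimplePolytope3 P) (hF : IsFacetOf F P)
    (hG : G ∈ adjFacets P F) : (F ∩ G).Nontrivial := by
  obtain ⟨v, hv, hvF, hvG⟩ := hP.isPolytope.exists_vertex_mem_face (hF.1.inter hG.1.1 hG.2.2)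
  obtain ⟨H, hvH, h⟩ := hP.exists_meetAtVertex hv hF hG.1 hG.2.1.symm hvF hvG
  obtain ⟨uF, bF, huF⟩ := hP.isPolytope.exists_supports hP.2.1 hF
  obtain ⟨uG, bG, huG⟩ := hP.isPolytope.exists_supports hP.2.1 hG.1
  obtain ⟨uH, bH, huH⟩ := hP.isPolytope.exists_supports hP.2.1 h.isFacetOf_trd
  obtain ⟨d, hd0, hdF, hdG, hdH⟩ : ∃ d : E3, d ≠ 0 ∧ uF d = 0 ∧ uG d = 0 ∧ uH d ≤ 0 := by
    obtain ⟨d, hd, hd0⟩ := Submodule.exists_mem_ne_zero_of_ne_bot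
      (LinearMap.ker_ne_bot_of_finrank_lt (f := uF.prod uG) (by simp))
    rw [LinearMap.ker_prod, Submodule.mem_inf, LinearMap.mem_ker, LinearMap.mem_ker] at hd
    rcases le_total (uH d) 0 with hle | hle
    · exact ⟨d, hd0, hd.1, hd.2, hle⟩
    · exact ⟨-d, neg_ne_zero.2 hd0, by simp [hd], by simp [hd], by simpa using hle⟩
  have hnear := hP.isPolytope.eventually_add_smul_mem (d := d) hP.2.1 hv.mem fun X hX hvX => by
    rcases (hP.mem_iff_of_mem_inter h ⟨⟨hvF, hvG⟩, hvH⟩ hX).1 hvX with rfl | rfl | rfl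
    exacts [⟨_, _, huF, hdF.le⟩, ⟨_, _, huG, hdG.le⟩, ⟨_, _, huH, hdH⟩]
  obtain ⟨t, htP, ht : 0 < t⟩ := (hnear.and self_mem_nhdsWithin).exists
  refine ⟨v, ⟨hvF, hvG⟩, v + t • d, ⟨(huF.mem_iff _).2 ⟨htP, ?_⟩, (huG.mem_iff _).2 ⟨htP, ?_⟩⟩, ?_⟩
  · rw [map_add, map_smul, hdF, smul_zero, add_zero, huF.apply_eq hvF]
  · rw [map_add, map_smul, hdG, smul_zero, add_zero, huG.apply_eq hvG]
  · simpa using ⟨ht.ne', hd0⟩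

theorem isEdgeOf_inter (hP : IsSimplePolytope3 P) (hF : IsFacetOf F P)
    (hG : G ∈ adjFacets P F) : IsEdgeOf (F ∩ G) P := by
  have hface := hF.1.inter hG.1.1 hG.2.2
  refine ⟨hface, le_antisymm ?_ ?_⟩
  · by_contra! hdim
    have hF' := hface.eq_of_subset inter_subset_left hF.subset (hF.2.trans_le hdim)
    have hG' := hface.eq_of_subset inter_subset_right hG.1.subset (hG.1.2.trans_le hdim)
    exact hG.2.1 (hG'.symm.trans hF')
  · rw [Nat.one_le_iff_ne_zero, setDim, ne_eq, Submodule.finrank_eq_zero,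
      vectorSpan_eq_bot_iff_subsingleton, not_subsingleton_iff]
    exact hP.nontrivial_inter hF hG

theorem exists_eq_inter_of_isEdgeOf (hP : IsSimplePolytope3 P) (hF : IsFacetOf F P) {e : Set E3}
    (he : IsEdgeOf e P) (heF : e ⊆ F) : ∃ G ∈ adjFacets P F, F ∩ G = e := by
  obtain ⟨z, hz⟩ := he.1.1.intrinsicInterior he.1.2.2.1
  have hze := intrinsicInterior_subset hz
  obtain ⟨G, hG, hzG, hGF⟩ : ∃ G, IsFacetOf G P ∧ z ∈ G ∧ G ≠ F := by
    by_contra! hall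
    obtain ⟨u, b, hu⟩ := hP.isPolytope.exists_supports hP.2.1 hF
    have hker : LinearMap.ker u ≤ vectorSpan ℝ e := fun k hk =>
      hP.isPolytope.mem_vectorSpan_of_apply_eq_zero hP.2.1 he.1 hze fun G hG hzG =>
        hall G hG hzG ▸ ⟨u, b, hu, hk⟩
    have hrank := Submodule.finrank_mono hker
    have hsum := u.finrank_range_add_finrank_ker
    have hrange := (LinearMap.range u).finrank_le
    have hdim : Module.finrank ℝ (vectorSpan ℝ e) = 1 := he.2
    rw [finrank_euclideanSpace_fin] at hsum
    rw [Module.finrank_self] at hrange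
    omega
  have hadj : G ∈ adjFacets P F := ⟨hG, hGF, z, heF hze, hzG⟩
  have heG := subset_of_mem_intrinsicInterior_of_isExtreme hG.1.2.2.2 he.1.subset hz hzG
  exact ⟨G, hadj, (he.1.eq_of_subset (subset_inter heF heG) (inter_subset_left.trans hF.subset)
    ((hP.isEdgeOf_inter hF hadj).2.trans he.2.symm).le).symm⟩

theorem facetEdges_eq_ncard_adjFacets (hP : IsSimplePolytope3 P) (hF : IsFacetOf F P) :
    facetEdges P F = (adjFacets P F).ncard := by
  have himage : {e | IsEdgeOf e P ∧ e ⊆ F} = (F ∩ ·) '' adjFacets P F := by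
    ext e
    constructor
    · rintro ⟨he, heF⟩
      exact hP.exists_eq_inter_of_isEdgeOf hF he heF
    · rintro ⟨G, hG, rfl⟩
      exact ⟨hP.isEdgeOf_inter hF hG, inter_subset_left⟩
  have hinj : InjOn (F ∩ ·) (adjFacets P F) := by
    intro G hG H hH (heq : F ∩ G = F ∩ H)
    by_contra hGH
    have hinter : F ∩ G ∩ H = F ∩ G :=
      inter_eq_left.2 (heq.subset.trans inter_subset_right)
    have h : MeetAtVertex P F G H :=
      ⟨hF, hG.1, hH.1, hG.2.1.symm, hH.2.1.symm, hGH, hinter.symm ▸ hG.2.2⟩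
    exact (hP.nontrivial_inter hF hG).not_subsingleton (hinter ▸ hP.subsingleton_inter h)
  rw [facetEdges, himage, hinj.ncard_image]

end IsSimplePolytope3

/-! ### Links and arcs -/

/-- The graph on the facets adjacent to `F` in which two facets are joined when they share a vertex
with `F`: the link of the vertex `F` in the boundary complex of the dual polytope. -/
def link (P F : Set E3) : SimpleGraph (Set E3) where
  Adj G H := MeetAtVertex P F G H
  symm := ⟨fun _ _ h => h.swap⟩
  loopless := ⟨fun _ h => h.snd_ne_trd rfl⟩

theorem neighborSet_link_subset_adjFacets (P F G : Set E3) :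
    (link P F).neighborSet G ⊆ adjFacets P F :=
  fun _ h => MeetAtVertex.trd_mem_adjFacets h

theorem neighborSet_eq_pair {α : Type*} {Γ : SimpleGraph α} {a x y : α}
    (hdeg : (Γ.neighborSet a).ncard = 2) (hx : Γ.Adj a x) (hy : Γ.Adj a y) (hxy : x ≠ y) :
    Γ.neighborSet a = {x, y} := by
  have hsub : {x, y} ⊆ Γ.neighborSet a := insert_subset hx (singleton_subset_iff.2 hy)
  exact (eq_of_subset_of_ncard_le hsub (by rw [hdeg, ncard_pair hxy])
    (finite_of_ncard_ne_zero (by omega))).symm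

theorem three_le_ncard_of_neighborSet_subset {α : Type*} {Γ : SimpleGraph α} {S : Set α}
    (hfin : S.Finite) (hne : S.Nonempty) (hsub : ∀ a ∈ S, Γ.neighborSet a ⊆ S)
    (hdeg : ∀ a ∈ S, (Γ.neighborSet a).ncard = 2) : 3 ≤ S.ncard := by
  obtain ⟨a, ha⟩ := hne
  calc 3 = (insert a (Γ.neighborSet a)).ncard := by
        rw [ncard_insert_of_notMem (Γ.notMem_neighborSet_self) (hfin.subset (hsub a ha)), hdeg a ha]
    _ ≤ S.ncard := ncard_le_ncard (insert_subset ha (hsub a ha)) hfin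

namespace IsSimplePolytope3

variable {P F G A B C D : Set E3}

theorem ncard_neighborSet_link (hP : IsSimplePolytope3 P) (hF : IsFacetOf F P)
    (hG : G ∈ adjFacets P F) : ((link P F).neighborSet G).ncard = 2 := by
  have hends := ncard_vertices_edge hP.isPolytope (hP.isEdgeOf_inter hF hG)
  obtain ⟨v, w, hvw, heq⟩ := ncard_eq_two.1 hends
  obtain ⟨hv, hvFG⟩ : IsVertexOf v P ∧ v ∈ F ∩ G := heq.superset (Or.inl rfl)
  obtain ⟨hw, hwFG⟩ : IsVertexOf w P ∧ w ∈ F ∩ G := heq.superset (Or.inr rfl)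
  obtain ⟨H, hvH, hH⟩ := hP.exists_meetAtVertex hv hF hG.1 hG.2.1.symm hvFG.1 hvFG.2
  obtain ⟨K, hwK, hK⟩ := hP.exists_meetAtVertex hw hF hG.1 hG.2.1.symm hwFG.1 hwFG.2
  refine ncard_eq_two.2 ⟨H, K, ?_, Subset.antisymm ?_ ?_⟩
  · rintro rfl
    exact hvw (hP.subsingleton_inter hH ⟨hvFG, hvH⟩ ⟨hwFG, hwK⟩)
  · intro X (hX : MeetAtVertex P F G X)
    obtain ⟨x, hx⟩ := hX.nonempty
    have hxmem : x ∈ ({v, w} : Set E3) := heq ▸ ⟨hP.isVertexOf_of_mem_inter hX hx, hx.1⟩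
    rcases hxmem with rfl | rfl
    · exact Or.inl ((((hP.mem_iff_of_mem_inter hH ⟨hvFG, hvH⟩ hX.isFacetOf_trd).1
        hx.2).resolve_left hX.fst_ne_trd.symm).resolve_left hX.snd_ne_trd.symm)
    · exact Or.inr ((((hP.mem_iff_of_mem_inter hK ⟨hwFG, hwK⟩ hX.isFacetOf_trd).1
        hx.2).resolve_left hX.fst_ne_trd.symm).resolve_left hX.snd_ne_trd.symm)
  · rintro X (rfl | rfl)
    exacts [hH, hK]

theorem facetEdges_le_three (hP : IsSimplePolytope3 P) (hAB : MeetAtVertex P G A B)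
    (hBC : MeetAtVertex P G B C) (hCA : MeetAtVertex P G C A) : facetEdges P G ≤ 3 := by
  have hG := hAB.isFacetOf_fst
  let T : Fin 3 → Set E3 := ![A, B, C]
  have hT : ∀ i j, i ≠ j → MeetAtVertex P G (T i) (T j) := by
    intro i j hij
    fin_cases i <;> fin_cases j <;> first
      | exact absurd rfl hij
      | exact hAB | exact hAB.swap | exact hBC | exact hBC.swap | exact hCA | exact hCA.swap
  have hinj : Function.Injective T := fun i j h => by_contra fun hij => (hT i j hij).snd_ne_trd h
  have hsucc : ∀ i : Fin 3, i + 1 ≠ i + 2 := by decide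
  have hT' : ∀ i, T i ∈ adjFacets P G := fun i =>
    (hT i (i + 1) (by simp)).snd_mem_adjFacets
  choose m hm using fun i => (hT (i + 1) (i + 2) (hsucc i)).nonempty
  have hmT : ∀ i j, m i ∈ T j ↔ j ≠ i := by
    intro i j
    rw [hP.mem_iff_of_mem_inter (hT _ _ (hsucc i)) (hm i) (hT' j).1, hinj.eq_iff, hinj.eq_iff,
      or_iff_right (hT' j).2.1]
    revert i j
    decide
  obtain ⟨f, c, hf⟩ := hP.isPolytope.exists_supports hP.2.1 hG
  have hsub : adjFacets P G ⊆ range T := by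
    rintro H ⟨hH, hHG, x, hxG, hxH⟩
    obtain ⟨i, hi⟩ := hP.isPolytope.exists_mem_of_apply_eq hP.2.1 (fun i => (hT' i).1)
      (hf.ne_zero (hP.isPolytope.interior_nonempty hP.2.1) hxG) (fun i => hG.subset (hm i).1.1)
      (fun i => hf.apply_eq (hm i).1.1) hmT hH.1 hxH (hf.apply_eq hxG)
    rcases (hP.mem_iff_of_mem_inter (hT _ _ (hsucc i)) (hm i) hH).1 hi with h | h | h
    exacts [absurd h hHG, h ▸ mem_range_self _, h ▸ mem_range_self _]
  calc facetEdges P G = (adjFacets P G).ncard := hP.facetEdges_eq_ncard_adjFacets hG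
    _ ≤ (range T).ncard := ncard_le_ncard hsub (finite_range T)
    _ = 3 := by rw [ncard_range_of_injective hinj, Nat.card_fin]

/-- The link of `G` is in fact connected, which excludes the second alternative. Without this,
any further component of the link still has at least three vertices. -/
theorem facetEdges_eq_four_or_seven_le (hP : IsSimplePolytope3 P) (hAB : MeetAtVertex P G A B)
    (hBC : MeetAtVertex P G B C) (hCD : MeetAtVertex P G C D) (hDA : MeetAtVertex P G D A)
    (hAC : A ≠ C) (hBD : B ≠ D) : facetEdges P G = 4 ∨ 7 ≤ facetEdges P G := by
  have hG := hAB.isFacetOf_fst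
  have hfin := hP.finite_adjFacets G
  have hdeg : ∀ X ∈ adjFacets P G, ((link P G).neighborSet X).ncard = 2 :=
    fun X hX => hP.ncard_neighborSet_link hG hX
  have hnbr : ∀ {X Y Z : Set E3}, MeetAtVertex P G X Y → MeetAtVertex P G Y Z → X ≠ Z →
      (link P G).neighborSet Y = {X, Z} := fun hXY hYZ hXZ =>
    neighborSet_eq_pair (hdeg _ hXY.trd_mem_adjFacets) hXY.swap hYZ hXZ
  let Q : Set (Set E3) := {A, B, C, D}
  have hQcard : Q.ncard = 4 := ncard_eq_four.2 ⟨A, B, C, D, hAB.snd_ne_trd, hAC,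
    hDA.snd_ne_trd.symm, hBC.snd_ne_trd, hBD, hCD.snd_ne_trd, rfl⟩
  have hQsub : Q ⊆ adjFacets P G := by
    rintro X (rfl | rfl | rfl | rfl)
    exacts [hAB.snd_mem_adjFacets, hBC.snd_mem_adjFacets, hCD.snd_mem_adjFacets,
      hDA.snd_mem_adjFacets]
  have hQclosed : ∀ X ∈ Q, (link P G).neighborSet X ⊆ Q := by
    rintro X (rfl | rfl | rfl | rfl)
    · rw [hnbr hDA hAB hBD.symm]; simp [Q, insert_subset_iff]
    · rw [hnbr hAB hBC hAC]; simp [Q, insert_subset_iff]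
    · rw [hnbr hBC hCD hBD]; simp [Q, insert_subset_iff]
    · rw [hnbr hCD hDA hAC.symm]; simp [Q, insert_subset_iff]
  have hsum := ncard_sdiff_add_ncard_of_subset hQsub hfin
  rw [hP.facetEdges_eq_ncard_adjFacets hG]
  rcases (adjFacets P G \ Q).eq_empty_or_nonempty with hempty | hne
  · rw [hempty, ncard_empty] at hsum
    omega
  · have hthree := three_le_ncard_of_neighborSet_subset (hfin.sdiff (t := Q)) hne (Γ := link P G)
      (fun X hX Y hY => ⟨neighborSet_link_subset_adjFacets P G X hY,
        fun hYQ => hX.2 (hQclosed Y hYQ (MeetAtVertex.swap hY))⟩) (fun X hX => hdeg X hX.1)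
    omega

end IsSimplePolytope3

/-- `S` is a finite set of vertices of degree two of `Γ` containing `X` and `Y`, which is left only
by the edges `XB` and `YC`: a path from `X` to `Y`, possibly together with some cycles. -/
structure IsArc {α : Type*} (Γ : SimpleGraph α) (S : Set α) (B X Y C : α) : Prop where
  finite : S.Finite
  ncard_neighborSet : ∀ a ∈ S, (Γ.neighborSet a).ncard = 2
  first_mem : X ∈ S
  last_mem : Y ∈ S
  adj_first : Γ.Adj X B
  adj_last : Γ.Adj Y C
  ne : B ≠ C
  mem_or : ∀ a ∈ S, ∀ b, Γ.Adj a b → b ∈ S ∨ (a = X ∧ b = B) ∨ (a = Y ∧ b = C)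
  notMem_first : B ∉ S
  notMem_last : C ∉ S

namespace IsArc

variable {α : Type*} {Γ : SimpleGraph α} {S : Set α} {B X Y C : α}

theorem first_eq_last (h : IsArc Γ S B X Y C) (hcard : S.ncard = 1) : X = Y :=
  (ncard_le_one h.finite).1 hcard.le X h.first_mem Y h.last_mem

theorem ncard_eq_one (h : IsArc Γ S B X X C) (hle : S.ncard ≤ 3) : S.ncard = 1 := by
  have hX : Γ.neighborSet X = {B, C} :=
    neighborSet_eq_pair (h.ncard_neighborSet X h.first_mem) h.adj_first h.adj_last h.ne
  have hclosed : ∀ a ∈ S \ {X}, Γ.neighborSet a ⊆ S \ {X} := by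
    rintro a ⟨haS, haX⟩ b (hab : Γ.Adj a b)
    refine ⟨((h.mem_or a haS b hab).resolve_right fun hor => haX (hor.elim And.left And.left)), ?_⟩
    rintro rfl
    have haBC : a ∈ ({B, C} : Set α) := hX ▸ hab.symm
    rcases haBC with rfl | rfl
    exacts [h.notMem_first haS, h.notMem_last haS]
  have hcard := ncard_sdiff_singleton_add_one h.first_mem h.finite
  rcases (S \ {X}).eq_empty_or_nonempty with hempty | hne
  · rw [← hcard, hempty, ncard_empty]
  · have := three_le_ncard_of_neighborSet_subset (h.finite.sdiff (t := {X})) hne hclosed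
      fun a ha => h.ncard_neighborSet a ha.1
    omega

theorem first_ne_last (h : IsArc Γ S B X Y C) (hle : S.ncard ≤ 3) (hne : S.ncard ≠ 1) :
    X ≠ Y := by
  rintro rfl
  exact hne (h.ncard_eq_one hle)

theorem adj_of_ncard_eq_two (h : IsArc Γ S B X Y C) (hcard : S.ncard = 2) : Γ.Adj X Y := by
  have hXY := h.first_ne_last (by omega) (by omega)
  have hS : {X, Y} = S :=
    eq_of_subset_of_ncard_le (insert_subset h.first_mem (singleton_subset_iff.2 h.last_mem))
      (by rw [hcard, ncard_pair hXY]) h.finite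
  obtain ⟨b, hb, hbB⟩ := exists_mem_notMem_of_ncard_lt_ncard (s := {B}) (t := Γ.neighborSet X)
    (by rw [ncard_singleton, h.ncard_neighborSet X h.first_mem]; omega)
  rcases h.mem_or X h.first_mem b hb with hbS | ⟨-, rfl⟩ | ⟨rfl, -⟩
  · rw [← hS] at hbS
    rcases hbS with rfl | rfl
    exacts [absurd rfl (Γ.ne_of_adj hb), hb]
  · exact absurd rfl hbB
  · exact absurd rfl hXY

theorem exists_adj_adj_of_ncard_eq_three (h : IsArc Γ S B X Y C) (hcard : S.ncard = 3) :
    ∃ Z ∈ S, Γ.Adj X Z ∧ Γ.Adj Z Y := by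
  have hXY := h.first_ne_last (by omega) (by omega)
  obtain ⟨Z, hZS, hZ⟩ := exists_mem_notMem_of_ncard_lt_ncard (s := {X, Y}) (t := S)
    (by rw [hcard, ncard_pair hXY]; omega)
  simp only [mem_insert_iff, mem_singleton_iff, not_or] at hZ
  have hS : {X, Y, Z} = S :=
    eq_of_subset_of_ncard_le (insert_subset h.first_mem (pair_subset h.last_mem hZS))
      (by rw [hcard, ncard_eq_three.2 ⟨X, Y, Z, hXY, Ne.symm hZ.1, Ne.symm hZ.2, rfl⟩]) h.finite
  have hsub : Γ.neighborSet Z ⊆ {X, Y} := by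
    intro b (hb : Γ.Adj Z b)
    have hbS := (h.mem_or Z hZS b hb).resolve_right
      fun hor => hor.elim (fun h' => hZ.1 h'.1) (fun h' => hZ.2 h'.1)
    rw [← hS] at hbS
    rcases hbS with rfl | rfl | rfl
    exacts [Or.inl rfl, Or.inr rfl, absurd rfl (Γ.ne_of_adj hb)]
  have heq : Γ.neighborSet Z = {X, Y} := eq_of_subset_of_ncard_le hsub
    (by rw [h.ncard_neighborSet Z hZS, ncard_pair hXY])
  have hZX : Γ.Adj Z X := heq.superset (Or.inl rfl)
  exact ⟨Z, hZS, hZX.symm, heq.superset (Or.inr rfl)⟩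

end IsArc

/-! ### 3-belts and plane sections -/

/-- The facets `T i` form a 3-belt of `P`. Contrary to `IsBelt`, this is manifestly invariant under
permutations of the index set. -/
structure IsThreeBelt (P : Set E3) (T : Fin 3 → Set E3) : Prop where
  isFacetOf : ∀ i, IsFacetOf (T i) P
  injective : Function.Injective T
  nonempty_inter : ∀ i j, (T i ∩ T j).Nonempty
  exists_notMem : ∀ x, ∃ i, x ∉ T i

/-- The plane `f = c` separates the two sides of the belt `T`: it crosses the edge of `T` opposite
to each `T i` in a point interior to that edge. -/
structure CutsBelt (P : Set E3) (T : Fin 3 → Set E3) (f : Module.Dual ℝ E3) (c : ℝ) : Prop where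
  ne_zero : f ≠ 0
  exists_point : ∀ i, ∃ m, f m = c ∧ ∀ G, IsFacetOf G P → (m ∈ G ↔ ∃ j ≠ i, G = T j)

/-- The facets of `P` lying strictly above the plane `f = c`. Those strictly below it are
`upperFacets P (-f) (-c)`. -/
def upperFacets (P : Set E3) (f : Module.Dual ℝ E3) (c : ℝ) : Set (Set E3) :=
  {G | IsFacetOf G P ∧ ∀ x ∈ G, c < f x}

/-- The number of facets adjacent to `F` which lie strictly above the plane `f = c`. -/
def upperDegree (P : Set E3) (f : Module.Dual ℝ E3) (c : ℝ) (F : Set E3) : ℕ :=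
  (adjFacets P F ∩ upperFacets P f c).ncard

theorem IsBelt.isThreeBelt {P : Set E3} {L : Fin 3 → Set E3} (h : IsBelt P L) :
    IsThreeBelt P L := by
  obtain ⟨-, ⟨-, hfacet, hedge⟩, hempty, -⟩ := h
  have hsucc : ∀ i j : Fin 3, i = j ∨ j = nxt i ∨ i = nxt j := by decide
  have hedge := hedge (by norm_num)
  have hne : ∀ i, L i ≠ L (nxt i) := by
    intro i heq
    have h1 := (hedge i).2
    rw [← heq, inter_self, (hfacet i).2] at h1
    omega
  refine ⟨hfacet, fun i j heq => ?_, fun i j => ?_, fun x => ?_⟩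
  · rcases hsucc i j with h | rfl | rfl
    exacts [h, absurd heq (hne i), absurd heq.symm (hne j)]
  · rcases hsucc i j with rfl | rfl | rfl
    exacts [by rw [inter_self]; exact (hfacet i).1.1, (hedge i).1.1,
      inter_comm (L j) _ ▸ (hedge j).1.1]
  · by_contra! hx
    exact (hempty rfl 0).subset ⟨⟨hx _, hx _⟩, hx _⟩

theorem isThreeBelt_of_meetAtVertex {P A B C X Y Z : Set E3} (hXY : MeetAtVertex P A X Y)
    (hYZ : MeetAtVertex P B Y Z) (hZX : MeetAtVertex P C Z X) (hXYZ : ¬ MeetAtVertex P X Y Z) :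
    IsThreeBelt P ![X, Y, Z] := by
  have hmeet : ∀ i j : Fin 3, i ≠ j → ∃ F, MeetAtVertex P F (![X, Y, Z] i) (![X, Y, Z] j) := by
    intro i j hij
    fin_cases i <;> fin_cases j <;> first
      | exact absurd rfl hij
      | exact ⟨_, hXY⟩ | exact ⟨_, hXY.swap⟩ | exact ⟨_, hYZ⟩ | exact ⟨_, hYZ.swap⟩
      | exact ⟨_, hZX⟩ | exact ⟨_, hZX.swap⟩
  have hfacet : ∀ i, IsFacetOf (![X, Y, Z] i) P := fun i => by
    obtain ⟨F, hF⟩ := hmeet i (i + 1) (by simp)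
    exact hF.isFacetOf_snd
  refine ⟨hfacet, fun i j heq => ?_, fun i j => ?_, fun x => ?_⟩
  · by_contra hij
    obtain ⟨F, hF⟩ := hmeet i j hij
    exact hF.snd_ne_trd heq
  · rcases eq_or_ne i j with rfl | hij
    · rw [inter_self]
      exact (hfacet i).1.1
    · obtain ⟨F, hF⟩ := hmeet i j hij
      exact hF.rotate.nonempty.mono inter_subset_left
  · by_contra! hx
    exact hXYZ ⟨hXY.isFacetOf_snd, hXY.isFacetOf_trd, hYZ.isFacetOf_trd, hXY.snd_ne_trd,
      hZX.snd_ne_trd.symm, hYZ.snd_ne_trd, x, ⟨hx 0, hx 1⟩, hx 2⟩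

namespace IsThreeBelt

variable {P : Set E3} {T : Fin 3 → Set E3} {i j : Fin 3}

theorem comp_equiv (hT : IsThreeBelt P T) (σ : Equiv.Perm (Fin 3)) : IsThreeBelt P (T ∘ σ) where
  isFacetOf i := hT.isFacetOf (σ i)
  injective := hT.injective.comp σ.injective
  nonempty_inter i j := hT.nonempty_inter (σ i) (σ j)
  exists_notMem x := by
    obtain ⟨i, hi⟩ := hT.exists_notMem x
    exact ⟨σ.symm i, by simpa using hi⟩

theorem mem_adjFacets (hT : IsThreeBelt P T) (hij : j ≠ i) : T j ∈ adjFacets P (T i) :=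
  ⟨hT.isFacetOf j, hT.injective.ne hij, hT.nonempty_inter i j⟩

theorem notMem_range_of_meetAtVertex (hT : IsThreeBelt P T) {X : Set E3}
    (hX : MeetAtVertex P (T i) (T j) X) : X ∉ range T := by
  rintro ⟨k, rfl⟩
  obtain ⟨x, hx⟩ := hX.nonempty
  obtain ⟨l, hl⟩ := hT.exists_notMem x
  have hl' : l ≠ i ∧ l ≠ j ∧ l ≠ k :=
    ⟨fun h => hl (h ▸ hx.1.1), fun h => hl (h ▸ hx.1.2), fun h => hl (h ▸ hx.2)⟩
  have hij : i ≠ j := fun h => hX.fst_ne_snd (h ▸ rfl)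
  have hik : i ≠ k := fun h => hX.fst_ne_trd (h ▸ rfl)
  have hjk : j ≠ k := fun h => hX.snd_ne_trd (h ▸ rfl)
  omega

theorem exists_mem_iff (hP : IsSimplePolytope3 P) (hT : IsThreeBelt P T) (i : Fin 3) :
    ∃ m, ∀ G, IsFacetOf G P → (m ∈ G ↔ ∃ j ≠ i, G = T j) := by
  have hj := hT.isFacetOf (i + 1)
  have hk : T (i + 2) ∈ adjFacets P (T (i + 1)) := hT.mem_adjFacets (by simp)
  have he := hP.isEdgeOf_inter hj hk
  obtain ⟨m, hm⟩ := he.1.1.intrinsicInterior he.1.2.2.1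
  have hme := intrinsicInterior_subset hm
  refine ⟨m, fun G hG => ⟨fun hmG => ?_, ?_⟩⟩
  · by_contra! hne
    have hmeet : MeetAtVertex P (T (i + 1)) (T (i + 2)) G := ⟨hj, hk.1, hG, hk.2.1.symm,
      (hne _ (by simp)).symm, (hne _ (by simp)).symm, m, hme, hmG⟩
    have hsub := subset_of_mem_intrinsicInterior_of_isExtreme hG.1.2.2.2 he.1.subset hm hmG
    exact (hP.nontrivial_inter hj hk).not_subsingleton
      ((hP.subsingleton_inter hmeet).anti (subset_inter subset_rfl hsub))
  · rintro ⟨j, hji, rfl⟩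
    obtain rfl | rfl : j = i + 1 ∨ j = i + 2 := by omega
    exacts [hme.1, hme.2]

theorem exists_cutsBelt (hP : IsSimplePolytope3 P) (hT : IsThreeBelt P T) :
    ∃ f c, CutsBelt P T f c := by
  choose m hm using hT.exists_mem_iff hP
  have hlt : Module.finrank ℝ (vectorSpan ℝ (range m)) < Module.finrank ℝ E3 := by
    have := finrank_vectorSpan_range_le ℝ m (n := 2) (by simp)
    rw [finrank_euclideanSpace_fin]
    omega
  obtain ⟨f, hf, hker⟩ := Submodule.exists_le_ker_of_lt_top _
    (Submodule.lt_top_of_finrank_lt_finrank hlt)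
  refine ⟨f, f (m 0), hf, fun i => ⟨m i, ?_, hm i⟩⟩
  have h0 := hker (vsub_mem_vectorSpan ℝ (mem_range_self i) (mem_range_self 0))
  rwa [LinearMap.mem_ker, vsub_eq_sub, map_sub, sub_eq_zero] at h0

end IsThreeBelt

theorem forall_gt_or_forall_lt {α : Type*} [TopologicalSpace α] {K : Set α} (hK : IsPreconnected K)
    {f : α → ℝ} (hf : ContinuousOn f K) {c : ℝ} (hne : ∀ x ∈ K, f x ≠ c) :
    (∀ x ∈ K, c < f x) ∨ ∀ x ∈ K, f x < c := by
  by_contra! h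
  obtain ⟨⟨x, hxK, hx⟩, y, hyK, hy⟩ := h
  obtain ⟨z, hzK, hz⟩ := hK.intermediate_value hxK hyK hf ⟨hx, hy⟩
  exact hne z hzK hz

theorem notMem_upperFacets_neg {P G : Set E3} {f : Module.Dual ℝ E3} {c : ℝ}
    (hG : G ∈ upperFacets P f c) : G ∉ upperFacets P (-f) (-c) := by
  intro hneg
  obtain ⟨x, hx⟩ := hG.1.1.1
  exact (hG.2 x hx).not_gt (neg_lt_neg_iff.1 (hneg.2 x hx))

namespace CutsBelt

variable {P G X Y : Set E3} {T : Fin 3 → Set E3} {f : Module.Dual ℝ E3} {c : ℝ} {i j k : Fin 3}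

theorem neg (hcut : CutsBelt P T f c) : CutsBelt P T (-f) (-c) where
  ne_zero := neg_ne_zero.2 hcut.ne_zero
  exists_point i := by
    obtain ⟨m, hmc, hm⟩ := hcut.exists_point i
    exact ⟨m, congrArg Neg.neg hmc, hm⟩

theorem comp_equiv (hcut : CutsBelt P T f c) (σ : Equiv.Perm (Fin 3)) :
    CutsBelt P (T ∘ σ) f c where
  ne_zero := hcut.ne_zero
  exists_point i := by
    obtain ⟨m, hmc, hm⟩ := hcut.exists_point (σ i)
    refine ⟨m, hmc, fun G hG => (hm G hG).trans ?_⟩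
    rw [← σ.exists_congr_right (q := fun j => j ≠ σ i ∧ G = T j)]
    simp

theorem exists_section (hT : IsThreeBelt P T) (hcut : CutsBelt P T f c) :
    ∃ m : Fin 3 → E3, (∀ i, m i ∈ P) ∧ (∀ i, f (m i) = c) ∧ (∀ i j, m i ∈ T j ↔ j ≠ i) ∧
      ∀ i G, IsFacetOf G P → m i ∈ G → G ∈ range T := by
  choose m hmc hm using hcut.exists_point
  have hmT : ∀ i j, m i ∈ T j ↔ j ≠ i := fun i j => by
    rw [hm i _ (hT.isFacetOf j)]
    simp [hT.injective.eq_iff]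
  refine ⟨m, fun i => (hT.isFacetOf (i + 1)).subset ((hmT i (i + 1)).2 (by simp)), hmc, hmT,
    fun i G hG hmG => ?_⟩
  obtain ⟨j, -, rfl⟩ := (hm i G hG).1 hmG
  exact mem_range_self j

theorem exists_mem_apply_eq (hT : IsThreeBelt P T) (hcut : CutsBelt P T f c) (hij : i ≠ j) :
    ∃ x ∈ T i ∩ T j, f x = c := by
  obtain ⟨m, -, hmc, hmT, -⟩ := hcut.exists_section hT
  obtain ⟨k, hik, hjk⟩ : ∃ k, i ≠ k ∧ j ≠ k := by revert i j; decide
  exact ⟨m k, ⟨(hmT k i).2 hik, (hmT k j).2 hjk⟩, hmc k⟩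

theorem notMem_upperFacets (hT : IsThreeBelt P T) (hcut : CutsBelt P T f c) :
    T i ∉ upperFacets P f c := by
  intro hi
  obtain ⟨x, hx, hxc⟩ := hcut.exists_mem_apply_eq hT (show i ≠ i + 1 by simp)
  exact (hi.2 x hx.1).ne' hxc

theorem notMem_range (hT : IsThreeBelt P T) (hcut : CutsBelt P T f c)
    (hG : G ∈ upperFacets P f c) : G ∉ range T := by
  rintro ⟨i, rfl⟩
  exact hcut.notMem_upperFacets hT hG

theorem mem_upperFacets_or (hP : IsSimplePolytope3 P) (hT : IsThreeBelt P T)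
    (hcut : CutsBelt P T f c) (hG : IsFacetOf G P) (hGT : G ∉ range T) :
    G ∈ upperFacets P f c ∨ G ∈ upperFacets P (-f) (-c) := by
  obtain ⟨m, hmP, hmc, hmT, hm⟩ := hcut.exists_section hT
  have hne : ∀ x ∈ G, f x ≠ c := fun x hx hxc => by
    obtain ⟨i, hi⟩ := hP.isPolytope.exists_mem_of_apply_eq hP.2.1 hT.isFacetOf hcut.ne_zero hmP
      hmc hmT hG.1 hx hxc
    exact hGT (hm i G hG hi)
  exact (forall_gt_or_forall_lt hG.1.2.2.1.isPreconnected
    f.continuous_of_finiteDimensional.continuousOn hne).imp (fun h => ⟨hG, h⟩)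
    fun h => ⟨hG, fun x hx => neg_lt_neg (h x hx)⟩

theorem mem_upperFacets_of_mem (hP : IsSimplePolytope3 P) (hT : IsThreeBelt P T)
    (hcut : CutsBelt P T f c) (hG : IsFacetOf G P) (hGT : G ∉ range T) {x : E3} (hx : x ∈ G)
    (hxc : c ≤ f x) : G ∈ upperFacets P f c :=
  (hcut.mem_upperFacets_or hP hT hG hGT).resolve_right fun h =>
    hxc.not_gt (neg_lt_neg_iff.1 (h.2 x hx))

theorem exists_apex (hP : IsSimplePolytope3 P) (hT : IsThreeBelt P T) (hcut : CutsBelt P T f c)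
    (hij : i ≠ j) : ∃ X ∈ upperFacets P f c, MeetAtVertex P (T i) (T j) X := by
  obtain ⟨x, hx, hxc⟩ := hcut.exists_mem_apply_eq hT hij
  obtain ⟨v, hv, hvij, hle⟩ := hP.isPolytope.exists_vertex_le_apply
    ((hT.isFacetOf i).1.inter (hT.isFacetOf j).1 ⟨x, hx⟩) f hx
  obtain ⟨X, hvX, hX⟩ := hP.exists_meetAtVertex hv (hT.isFacetOf i) (hT.isFacetOf j)
    (hT.injective.ne hij) hvij.1 hvij.2
  exact ⟨X, hcut.mem_upperFacets_of_mem hP hT hX.isFacetOf_trd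
    (hT.notMem_range_of_meetAtVertex hX) hvX (hxc ▸ hle), hX⟩

theorem apex_unique (hP : IsSimplePolytope3 P) (hT : IsThreeBelt P T) (hcut : CutsBelt P T f c)
    (hXup : X ∈ upperFacets P f c) (hX : MeetAtVertex P (T i) (T j) X)
    (hYup : Y ∈ upperFacets P f c) (hY : MeetAtVertex P (T i) (T j) Y) : X = Y := by
  have hij : i ≠ j := fun h => hX.fst_ne_snd (h ▸ rfl)
  obtain ⟨W, hWlow, hW⟩ := hcut.neg.exists_apex hP hT hij
  have hXW : X ≠ W := fun h => notMem_upperFacets_neg hXup (h ▸ hWlow)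
  have hYW : Y ≠ W := fun h => notMem_upperFacets_neg hYup (h ▸ hWlow)
  have heq : (link P (T i)).neighborSet (T j) = {X, W} := neighborSet_eq_pair
    (hP.ncard_neighborSet_link (hT.isFacetOf i) (hT.mem_adjFacets hij.symm)) hX hW hXW
  have hYmem : Y ∈ ({X, W} : Set (Set E3)) := heq ▸ hY
  exact (hYmem.resolve_right hYW).symm

theorem isArc (hP : IsSimplePolytope3 P) (hT : IsThreeBelt P T) (hcut : CutsBelt P T f c)
    (hjk : j ≠ k) (hXup : X ∈ upperFacets P f c) (hX : MeetAtVertex P (T i) (T j) X)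
    (hYup : Y ∈ upperFacets P f c) (hY : MeetAtVertex P (T i) (T k) Y) :
    IsArc (link P (T i)) (adjFacets P (T i) ∩ upperFacets P f c) (T j) X Y (T k) where
  finite := (hP.finite_adjFacets _).inter_of_left _
  ncard_neighborSet G hG := hP.ncard_neighborSet_link (hT.isFacetOf i) hG.1
  first_mem := ⟨hX.trd_mem_adjFacets, hXup⟩
  last_mem := ⟨hY.trd_mem_adjFacets, hYup⟩
  adj_first := hX.swap
  adj_last := hY.swap
  ne := hT.injective.ne hjk
  notMem_first h := hcut.notMem_upperFacets hT h.2
  notMem_last h := hcut.notMem_upperFacets hT h.2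
  mem_or G hG H (hGH : MeetAtVertex P (T i) G H) := by
    by_cases hHT : H ∈ range T
    · obtain ⟨l, rfl⟩ := hHT
      have hli : l ≠ i := fun h => hGH.fst_ne_trd (h ▸ rfl)
      have hij : i ≠ j := fun h => hX.fst_ne_snd (h ▸ rfl)
      have hik : i ≠ k := fun h => hY.fst_ne_snd (h ▸ rfl)
      obtain rfl | rfl : l = j ∨ l = k := by omega
      · exact Or.inr (Or.inl ⟨hcut.apex_unique hP hT hG.2 hGH.swap hXup hX, rfl⟩)
      · exact Or.inr (Or.inr ⟨hcut.apex_unique hP hT hG.2 hGH.swap hYup hY, rfl⟩)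
    · obtain ⟨x, hx⟩ := hGH.nonempty
      exact Or.inl ⟨hGH.trd_mem_adjFacets,
        hcut.mem_upperFacets_of_mem hP hT hGH.isFacetOf_trd hHT hx.2 (hG.2.2 x hx.1.2).le⟩

theorem one_le_upperDegree (hP : IsSimplePolytope3 P) (hT : IsThreeBelt P T)
    (hcut : CutsBelt P T f c) (i : Fin 3) : 1 ≤ upperDegree P f c (T i) := by
  obtain ⟨X, hXup, hX⟩ := hcut.exists_apex hP hT (show i ≠ i + 1 by simp)
  exact Nat.one_le_iff_ne_zero.2 (ncard_ne_zero_of_mem ⟨hX.trd_mem_adjFacets, hXup⟩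
    ((hP.finite_adjFacets _).inter_of_left _))

theorem upperDegree_add_ncard_add_two_le (hP : IsSimplePolytope3 P) (hT : IsThreeBelt P T)
    (hcut : CutsBelt P T f c) {S : Set (Set E3)} (hS : S ⊆ adjFacets P (T i))
    (hSup : Disjoint S (upperFacets P f c)) (hST : Disjoint S (range T)) :
    upperDegree P f c (T i) + S.ncard + 2 ≤ facetEdges P (T i) := by
  have hfin := hP.finite_adjFacets (T i)
  let N : Set (Set E3) := {T (i + 1), T (i + 2)}
  have hNT : N ⊆ range T := pair_subset (mem_range_self _) (mem_range_self _)
  have hN : N ⊆ adjFacets P (T i) :=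
    pair_subset (hT.mem_adjFacets (by simp)) (hT.mem_adjFacets (by simp))
  have hNcard : N.ncard = 2 := ncard_pair (hT.injective.ne (by simp))
  have hdisj : Disjoint (adjFacets P (T i) ∩ upperFacets P f c) S :=
    hSup.symm.mono_left inter_subset_right
  have hdisj' : Disjoint ((adjFacets P (T i) ∩ upperFacets P f c) ∪ S) N := by
    refine Disjoint.mono_right hNT (disjoint_union_left.2 ⟨?_, hST⟩)
    exact disjoint_left.2 fun G hG => hcut.notMem_range hT hG.2
  rw [hP.facetEdges_eq_ncard_adjFacets (hT.isFacetOf i), ← hNcard, upperDegree,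
    ← ncard_union_eq hdisj (hfin.inter_of_left _) (hfin.subset hS),
    ← ncard_union_eq hdisj' ((hfin.inter_of_left _).union (hfin.subset hS)) (hfin.subset hN)]
  exact ncard_le_ncard (union_subset (union_subset inter_subset_left hS) hN) hfin

end CutsBelt

/-! ### Descent -/

/-- A 3-belt together with a plane cutting it, such that at most six of the incidences between the
belt and its neighbours are above the plane. -/
structure IsLightCut (P : Set E3) (T : Fin 3 → Set E3) (f : Module.Dual ℝ E3) (c : ℝ) : Prop where
  isThreeBelt : IsThreeBelt P T
  cutsBelt : CutsBelt P T f c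
  sum_upperDegree_le : ∑ i, upperDegree P f c (T i) ≤ 6

theorem upperFacets_subset {P : Set E3} {f g : Module.Dual ℝ E3} {c e : ℝ}
    (hbelow : ∀ x ∈ P, f x ≤ c → g x < e) : upperFacets P g e ⊆ upperFacets P f c :=
  fun _ hG => ⟨hG.1, fun x hx => not_le.1 fun h =>
    (hbelow x (hG.1.subset hx) h).not_gt (hG.2 x hx)⟩

theorem IsLightCut.comp_equiv {P : Set E3} {T : Fin 3 → Set E3} {f : Module.Dual ℝ E3} {c : ℝ}
    (h : IsLightCut P T f c) (σ : Equiv.Perm (Fin 3)) : IsLightCut P (T ∘ σ) f c where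
  isThreeBelt := h.isThreeBelt.comp_equiv σ
  cutsBelt := h.cutsBelt.comp_equiv σ
  sum_upperDegree_le :=
    (Equiv.sum_comp σ fun i => upperDegree P f c (T i)).trans_le h.sum_upperDegree_le

namespace IsThreeBelt

variable {P : Set E3} {T Y : Fin 3 → Set E3} {f : Module.Dual ℝ E3} {c : ℝ}

theorem exists_cutsBelt_above (hP : IsSimplePolytope3 P) (hY : IsThreeBelt P Y)
    (hYup : ∀ i, Y i ∈ upperFacets P f c) :
    ∃ g e, CutsBelt P Y g e ∧ ∀ x ∈ P, f x ≤ c → g x < e := by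
  obtain ⟨g, e, hcut⟩ := hY.exists_cutsBelt hP
  obtain ⟨m, hmP, hme, hmY, -⟩ := hcut.exists_section hY
  have hmc : range m ⊆ {x | c < f x} := by
    rintro _ ⟨i, rfl⟩
    exact (hYup (i + 1)).2 _ ((hmY i (i + 1)).2 (by simp))
  have hconv : Convex ℝ (P ∩ {x | f x ≤ c}) :=
    hP.isPolytope.convex.inter (convex_halfSpace_le f.isLinear c)
  have hne : ∀ x ∈ P ∩ {x | f x ≤ c}, g x ≠ e := by
    rintro x ⟨hxP, hxc : f x ≤ c⟩ hxe
    have hhull := hP.isPolytope.mem_convexHull_range_of_apply_eq hP.2.1 hY.isFacetOf hcut.ne_zero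
      hmP hme hmY hxP hxe
    exact hxc.not_gt (convexHull_min hmc (convex_halfSpace_gt f.isLinear c) hhull)
  rcases forall_gt_or_forall_lt hconv.isPreconnected
    g.continuous_of_finiteDimensional.continuousOn hne with hgt | hlt
  · exact ⟨-g, -e, hcut.neg, fun x hxP hxc => neg_lt_neg (hgt x ⟨hxP, hxc⟩)⟩
  · exact ⟨g, e, hcut, fun x hxP hxc => hlt x ⟨hxP, hxc⟩⟩

theorem exists_isLightCut (hP : IsSimplePolytope3 P)
    (hdeg : ∀ F, IsFacetOf F P → facetEdges P F ≤ 6) (hT : IsThreeBelt P T) :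
    ∃ f c, IsLightCut P T f c := by
  obtain ⟨f, c, hcut⟩ := hT.exists_cutsBelt hP
  have hsum : ∀ i, upperDegree P f c (T i) + upperDegree P (-f) (-c) (T i) ≤ 4 := fun i => by
    have h := hcut.upperDegree_add_ncard_add_two_le (i := i) hP hT
      (S := adjFacets P (T i) ∩ upperFacets P (-f) (-c)) inter_subset_left
      (disjoint_right.2 fun G hG hG' => notMem_upperFacets_neg hG hG'.2)
      (disjoint_left.2 fun G hG => hcut.neg.notMem_range hT hG.2)
    have := h.trans (hdeg _ (hT.isFacetOf i))
    unfold upperDegree at this ⊢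
    omega
  by_cases hle : ∑ i, upperDegree P f c (T i) ≤ 6
  · exact ⟨f, c, hT, hcut, hle⟩
  · refine ⟨-f, -c, hT, hcut.neg, ?_⟩
    have := Finset.sum_le_sum fun i (_ : i ∈ Finset.univ) => hsum i
    rw [Finset.sum_add_distrib] at this
    simp only [Finset.sum_const, Finset.card_univ, Fintype.card_fin, smul_eq_mul] at this
    omega

/-- The facets `T j` with `j ∈ A i` are adjacent to `Y i` but not above the new plane, which leaves
room for at most six incidences above it. -/
theorem exists_isLightCut_above (hP : IsSimplePolytope3 P)
    (hdeg : ∀ F, IsFacetOf F P → facetEdges P F ≤ 6) (hT : IsThreeBelt P T)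
    (hcut : CutsBelt P T f c) (hY : IsThreeBelt P Y) (hYup : ∀ i, Y i ∈ upperFacets P f c)
    (A : Fin 3 → Finset (Fin 3)) (hA : ∀ i, ∀ j ∈ A i, T j ∈ adjFacets P (Y i))
    (hsum : 6 ≤ ∑ i, (A i).card) :
    ∃ g e, IsLightCut P Y g e ∧ upperFacets P g e ⊂ upperFacets P f c := by
  obtain ⟨g, e, hcutY, hbelow⟩ := hY.exists_cutsBelt_above hP hYup
  have hsub := upperFacets_subset hbelow
  have hle : ∀ i, upperDegree P g e (Y i) + (A i).card ≤ 4 := fun i => by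
    have h := hcutY.upperDegree_add_ncard_add_two_le (i := i) hP hY (S := T '' A i)
      (image_subset_iff.2 (hA i))
      (disjoint_left.2 fun G hG hGup =>
        hcut.notMem_range hT (hsub hGup) (image_subset_range T _ hG))
      (disjoint_left.2 <| by
        rintro _ hG ⟨k, rfl⟩
        exact hcut.notMem_range hT (hYup k) (image_subset_range T _ hG))
    have := h.trans (hdeg _ (hY.isFacetOf i))
    rw [ncard_image_of_injective _ hT.injective, ncard_coe_finset] at this
    omega
  refine ⟨g, e, ⟨hY, hcutY, ?_⟩, hsub, fun h => hcutY.notMem_upperFacets hY (h (hYup 0))⟩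
  have := Finset.sum_le_sum fun i (_ : i ∈ Finset.univ) => hle i
  rw [Finset.sum_add_distrib] at this
  simp only [Finset.sum_const, Finset.card_univ, Fintype.card_fin, smul_eq_mul] at this
  omega

end IsThreeBelt

namespace IsFullerene

variable {P U V W : Set E3} {T : Fin 3 → Set E3} {f : Module.Dual ℝ E3} {c : ℝ}

theorem facetEdges_le_six (hP : IsFullerene P) (F : Set E3) (hF : IsFacetOf F P) :
    facetEdges P F ≤ 6 := by
  rcases hP.2 F hF with h | h <;> omega

theorem not_meetAtVertex_triangle {A B C G : Set E3} (hP : IsFullerene P)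
    (hAB : MeetAtVertex P G A B) (hBC : MeetAtVertex P G B C) : ¬ MeetAtVertex P G C A := by
  intro hCA
  have := hP.1.facetEdges_le_three hAB hBC hCA
  rcases hP.2 G hAB.isFacetOf_fst with h | h <;> omega

theorem not_meetAtVertex_quadrilateral {A B C D G : Set E3} (hP : IsFullerene P)
    (hAB : MeetAtVertex P G A B) (hBC : MeetAtVertex P G B C) (hCD : MeetAtVertex P G C D)
    (hAC : A ≠ C) (hBD : B ≠ D) : ¬ MeetAtVertex P G D A := by
  intro hDA
  have := hP.1.facetEdges_eq_four_or_seven_le hAB hBC hCD hDA hAC hBD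
  rcases hP.2 G hAB.isFacetOf_fst with h | h <;> omega

/-- Upper degrees `2, 2, 2`: the apexes `U`, `V`, `W` of the belt form a belt, since otherwise `U`
would be a quadrilateral. -/
theorem exists_isLightCut_of_two_two_two (hP : IsFullerene P) (hT : IsThreeBelt P T)
    (hcut : CutsBelt P T f c) (hU : U ∈ upperFacets P f c) (hV : V ∈ upperFacets P f c)
    (hW : W ∈ upperFacets P f c) (h01U : MeetAtVertex P (T 0) (T 1) U)
    (h02V : MeetAtVertex P (T 0) (T 2) V) (h12W : MeetAtVertex P (T 1) (T 2) W)
    (h0UV : MeetAtVertex P (T 0) U V) (h1UW : MeetAtVertex P (T 1) U W)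
    (h2VW : MeetAtVertex P (T 2) V W) :
    ∃ T' g e, IsLightCut P T' g e ∧ upperFacets P g e ⊂ upperFacets P f c := by
  have hU01 := h01U.rotate.rotate
  have hV02 := h02V.rotate.rotate
  have hW12 := h12W.rotate.rotate
  have hUVW : ¬ MeetAtVertex P U V W := fun h =>
    hP.not_meetAtVertex_quadrilateral h0UV.rotate.swap h h1UW.rotate
      (fun h0 => hcut.notMem_upperFacets hT (h0 ▸ hW))
      (fun h1 => hcut.notMem_upperFacets hT (h1 ▸ hV)) hU01.swap
  refine ⟨![U, V, W], hT.exists_isLightCut_above hP.1 hP.facetEdges_le_six hcut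
    (isThreeBelt_of_meetAtVertex h0UV h2VW h1UW.swap hUVW) ?_ ![{0, 1}, {0, 2}, {1, 2}] ?_ ?_⟩
  · intro i
    fin_cases i
    exacts [hU, hV, hW]
  · intro i j hj
    fin_cases i
    · obtain rfl | rfl : j = 0 ∨ j = 1 := by simpa using hj
      exacts [hU01.snd_mem_adjFacets, hU01.trd_mem_adjFacets]
    · obtain rfl | rfl : j = 0 ∨ j = 2 := by simpa using hj
      exacts [hV02.snd_mem_adjFacets, hV02.trd_mem_adjFacets]
    · obtain rfl | rfl : j = 1 ∨ j = 2 := by simpa using hj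
      exacts [hW12.snd_mem_adjFacets, hW12.trd_mem_adjFacets]
  · decide

/-- Upper degrees `1, 2, 3`: the apexes `U`, `W` of the belt and the facet `Z` between them form
a belt, since otherwise `Z` would be a triangle. -/
theorem exists_isLightCut_of_one_two_three (hP : IsFullerene P) (hT : IsThreeBelt P T)
    (hcut : CutsBelt P T f c) (hU : U ∈ upperFacets P f c) (hW : W ∈ upperFacets P f c)
    (h01U : MeetAtVertex P (T 0) (T 1) U)
    (h02U : MeetAtVertex P (T 0) (T 2) U) (h12W : MeetAtVertex P (T 1) (T 2) W)
    (h1UW : MeetAtVertex P (T 1) U W) {Z : Set E3} (hZ : Z ∈ upperFacets P f c)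
    (h2UZ : MeetAtVertex P (T 2) U Z) (h2ZW : MeetAtVertex P (T 2) Z W) :
    ∃ T' g e, IsLightCut P T' g e ∧ upperFacets P g e ⊂ upperFacets P f c := by
  have hU01 := h01U.rotate.rotate
  have hU02 := h02U.rotate.rotate
  have hW12 := h12W.rotate.rotate
  have hUWZ : ¬ MeetAtVertex P U W Z := fun h =>
    hP.not_meetAtVertex_triangle h2UZ.rotate.rotate h.rotate.rotate h2ZW.rotate
  refine ⟨![U, W, Z], hT.exists_isLightCut_above hP.1 hP.facetEdges_le_six hcut
    (isThreeBelt_of_meetAtVertex h1UW h2ZW.swap h2UZ.swap hUWZ) ?_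
    ![{0, 1, 2}, {1, 2}, {2}] ?_ ?_⟩
  · intro i
    fin_cases i
    exacts [hU, hW, hZ]
  · intro i j hj
    fin_cases i
    · obtain rfl | rfl | rfl : j = 0 ∨ j = 1 ∨ j = 2 := by simpa using hj
      exacts [hU01.snd_mem_adjFacets, hU01.trd_mem_adjFacets, hU02.trd_mem_adjFacets]
    · obtain rfl | rfl : j = 1 ∨ j = 2 := by simpa using hj
      exacts [hW12.snd_mem_adjFacets, hW12.trd_mem_adjFacets]
    · obtain rfl : j = 2 := by simpa using hj
      exact h2UZ.rotate.rotate.snd_mem_adjFacets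
  · decide

end IsFullerene

theorem IsFullerene.exists_isLightCut_ssubset_of_monotone {P : Set E3} {T : Fin 3 → Set E3}
    {f : Module.Dual ℝ E3} {c : ℝ} (hP : IsFullerene P) (h : IsLightCut P T f c)
    (hmono : Monotone fun i => upperDegree P f c (T i)) :
    ∃ T' g e, IsLightCut P T' g e ∧ upperFacets P g e ⊂ upperFacets P f c := by
  obtain ⟨hT, hcut, hsum⟩ := h
  rw [Fin.sum_univ_three] at hsum
  have hone := hcut.one_le_upperDegree hP.1 hT 0
  have hle01 : upperDegree P f c (T 0) ≤ upperDegree P f c (T 1) := hmono (by decide)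
  have hle12 : upperDegree P f c (T 1) ≤ upperDegree P f c (T 2) := hmono (by decide)
  obtain ⟨U, hU, h01U⟩ := hcut.exists_apex hP.1 hT (show 0 ≠ 1 by decide)
  obtain ⟨V, hV, h02V⟩ := hcut.exists_apex hP.1 hT (show 0 ≠ 2 by decide)
  obtain ⟨W, hW, h12W⟩ := hcut.exists_apex hP.1 hT (show 1 ≠ 2 by decide)
  have arc0 := hcut.isArc hP.1 hT (by decide) hU h01U hV h02V
  have arc1 := hcut.isArc hP.1 hT (by decide) hU h01U.rotate.swap hW h12W
  have arc2 := hcut.isArc hP.1 hT (by decide) hV h02V.rotate.swap hW h12W.rotate.swap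
  obtain h0 | h0 : upperDegree P f c (T 0) = 1 ∨ upperDegree P f c (T 0) = 2 := by omega
  · obtain rfl := arc0.first_eq_last h0
    obtain h1 | h1 : upperDegree P f c (T 1) = 1 ∨ upperDegree P f c (T 1) = 2 := by omega
    · obtain rfl := arc1.first_eq_last h1
      exact absurd h02V.rotate.rotate.swap
        (hP.not_meetAtVertex_triangle h01U.rotate.rotate h12W.rotate.rotate)
    · have h1UW : MeetAtVertex P (T 1) U W := arc1.adj_of_ncard_eq_two h1
      obtain h2 | h2 : upperDegree P f c (T 2) = 2 ∨ upperDegree P f c (T 2) = 3 := by omega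
      · have h2UW : MeetAtVertex P (T 2) U W := arc2.adj_of_ncard_eq_two h2
        exact absurd h1UW.rotate.rotate.swap
          (hP.not_meetAtVertex_triangle h12W.rotate.rotate h2UW.rotate.rotate)
      · obtain ⟨Z, hZ, h2UZ, h2ZW⟩ := arc2.exists_adj_adj_of_ncard_eq_three h2
        exact hP.exists_isLightCut_of_one_two_three hT hcut hU hW h01U h02V h12W h1UW hZ.2
          h2UZ h2ZW
  · exact hP.exists_isLightCut_of_two_two_two hT hcut hU hV hW h01U h02V h12W
      (arc0.adj_of_ncard_eq_two h0) (arc1.adj_of_ncard_eq_two (by unfold upperDegree at *; omega))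
      (arc2.adj_of_ncard_eq_two (by unfold upperDegree at *; omega))

theorem IsFullerene.exists_isLightCut_ssubset {P : Set E3} {T : Fin 3 → Set E3}
    {f : Module.Dual ℝ E3} {c : ℝ} (hP : IsFullerene P) (h : IsLightCut P T f c) :
    ∃ T' g e, IsLightCut P T' g e ∧ upperFacets P g e ⊂ upperFacets P f c :=
  hP.exists_isLightCut_ssubset_of_monotone
    (h.comp_equiv (Tuple.sort fun i => upperDegree P f c (T i)))
    (Tuple.monotone_sort fun i => upperDegree P f c (T i))

theorem IsFullerene.not_isLightCut {P : Set E3} (hP : IsFullerene P) (T : Fin 3 → Set E3)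
    (f : Module.Dual ℝ E3) (c : ℝ) : ¬ IsLightCut P T f c := by
  induction hn : (upperFacets P f c).ncard using Nat.strong_induction_on generalizing T f c with
  | h n ih =>
    intro h
    obtain ⟨T', g, e, h', hssub⟩ := hP.exists_isLightCut_ssubset h
    have hfin : (upperFacets P f c).Finite :=
      hP.1.isPolytope.finite_facets.subset fun _ hG => hG.1
    exact ih _ (hn ▸ ncard_lt_ncard hssub hfin) T' g e rfl h'

theorem IsSimplePolytope3.facetEdges_lt_ncard_facets {P F : Set E3} (hP : IsSimplePolytope3 P)
    (hF : IsFacetOf F P) : facetEdges P F < (facets P).ncard := by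
  have hfin : (facets P).Finite := hP.isPolytope.finite_facets
  rw [hP.facetEdges_eq_ncard_adjFacets hF]
  exact ncard_lt_ncard ⟨fun G hG => hG.1, fun h => (h hF).2.1 rfl⟩ hfin

theorem IsFullerene.ncard_facets_ne_four {P : Set E3} (hP : IsFullerene P) :
    (facets P).ncard ≠ 4 := by
  obtain ⟨x, hx⟩ := (ne_univ_iff_exists_notMem P).1 hP.1.isPolytope.isCompact.ne_univ
  obtain ⟨F, hF, -⟩ := hP.1.isPolytope.exists_facet_lt_apply hP.1.2.1 hx
  have := hP.1.facetEdges_lt_ncard_facets hF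
  rcases hP.2 F hF with h | h <;> omega

/-- Every fullerene is a flag 3-polytope. -/
theorem fullerene_is_flag (P : Set E3) (hP : IsFullerene P) :
    IsFlag3Polytope P := by
  refine ⟨hP.1, hP.ncard_facets_ne_four, fun B hB => ?_⟩
  obtain ⟨f, c, hcut⟩ := hB.isThreeBelt.exists_isLightCut hP.1 hP.facetEdges_le_six
  exact hP.not_isLightCut B f c hcut
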